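/- arXiv:1801.07891 — 2 statements merged into one kernel-verified Lean document; each statement's English description precedes it below -/
import Mathlib

section
/- Let d ≥ 1, T > 0 and 0 < C₁ ≤ C₂. Let g : [0,T] × ℝ^d × ℝ^d → ℝ be ℤ^d-periodic in x, continuous, continuously differentiable in (t,x) and twice continuously differentiable in v for 0 < t < T, and satisfy ∂_t g + v·∇_x g = ℛ[g] U[g] at every point with 0 < t < T. Suppose moreover there is C₃ > 0 with |g(t,x,v)| + |∇_x g(t,x,v)| + |∇_v g(t,x,v)| + |D²_v g(t,x,v)| ≤ C₃ e^{−|v|²/8} for all (t,x,v). If C₁ √μ(v) ≤ g(0,x,v) ≤ C₂ √μ(v) for all (x,v) ∈ ℝ^d × ℝ^d, then C₁ √μ(v) ≤ g(t,x,v) ≤ C₂ √μ(v) for all (t,x,v) ∈ [0,T] × ℝ^d × ℝ^d. -/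
open Real MeasureTheory
open scoped BigOperators ENNReal

noncomputable section

abbrev E (d : ℕ) := EuclideanSpace ℝ (Fin d)
abbrev Z (d : ℕ) := ℝ × E d × E d

variable {d : ℕ}

/-- The kinetic cylinder `Q_r(z₀)`. -/
def kCyl (r : ℝ) (z₀ : Z d) : Set (Z d) :=
  {z | z₀.1 - r ^ 2 < z.1 ∧ z.1 ≤ z₀.1 ∧
    ‖z.2.1 - z₀.2.1 - (z.1 - z₀.1) • z₀.2.2‖ < r ^ 3 ∧ ‖z.2.2 - z₀.2.2‖ < r}

/-- Partial derivative in time. -/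
def pt (g : Z d → ℝ) (z : Z d) : ℝ := deriv (fun s => g (s, z.2.1, z.2.2)) z.1

/-- Partial derivative in the direction `x i`. -/
def px (g : Z d → ℝ) (i : Fin d) (z : Z d) : ℝ :=
  deriv (fun s : ℝ => g (z.1, z.2.1 + s • EuclideanSpace.single i (1 : ℝ), z.2.2)) 0

/-- Partial derivative in the direction `v i`. -/
def pv (g : Z d → ℝ) (i : Fin d) (z : Z d) : ℝ :=
  deriv (fun s : ℝ => g (z.1, z.2.1, z.2.2 + s • EuclideanSpace.single i (1 : ℝ))) 0

/-- Second partial derivative in `v i`, `v j`. -/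
def pvv (g : Z d → ℝ) (i j : Fin d) : Z d → ℝ := pv (pv g j) i

/-- Transport derivative `∂_t g + v ⋅ ∇_x g`. -/
def Yop (g : Z d → ℝ) (z : Z d) : ℝ := pt g z + ∑ i, z.2.2 i * px g i z

/-- Euclidean norm of the velocity gradient `∇_v g`. -/
def gradvNorm (g : Z d → ℝ) (z : Z d) : ℝ := Real.sqrt (∑ i, (pv g i z) ^ 2)

/-- (Frobenius) norm of the velocity Hessian `D²_v g`. -/
def hessvNorm (g : Z d → ℝ) (z : Z d) : ℝ := Real.sqrt (∑ i, ∑ j, (pvv g i j z) ^ 2)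

/-- `g` is `C¹` in `(t,x)` and `C²` in `v` on `Q`, with continuous partial derivatives. -/
structure KinReg (g : Z d → ℝ) (Q : Set (Z d)) : Prop where
  cont : ContinuousOn g Q
  dt : ∀ z ∈ Q, DifferentiableAt ℝ (fun s => g (s, z.2.1, z.2.2)) z.1
  dx : ∀ z ∈ Q, ∀ i, DifferentiableAt ℝ
    (fun s : ℝ => g (z.1, z.2.1 + s • EuclideanSpace.single i (1 : ℝ), z.2.2)) 0
  dv : ∀ z ∈ Q, ∀ i, DifferentiableAt ℝ
    (fun s : ℝ => g (z.1, z.2.1, z.2.2 + s • EuclideanSpace.single i (1 : ℝ))) 0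
  dvv : ∀ z ∈ Q, ∀ i j, DifferentiableAt ℝ
    (fun s : ℝ => pv g j (z.1, z.2.1, z.2.2 + s • EuclideanSpace.single i (1 : ℝ))) 0
  ptc : ContinuousOn (pt g) Q
  pxc : ∀ i, ContinuousOn (px g i) Q
  pvc : ∀ i, ContinuousOn (pv g i) Q
  pvvc : ∀ i j, ContinuousOn (pvv g i j) Q

/-- Sup norm (in `ℝ≥0∞`) of `h` over the set `Q`. -/
def supAbs (Q : Set (Z d)) (h : Z d → ℝ) : ℝ≥0∞ := ⨆ z ∈ Q, ENNReal.ofReal |h z|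

/-- Kinetic Hölder seminorm of exponent `β` on `Q`. -/
def kHolder (β : ℝ) (Q : Set (Z d)) (h : Z d → ℝ) : ℝ≥0∞ :=
  ⨆ (z₀ ∈ Q) (r : ℝ) (_ : 0 < r) (_ : kCyl r z₀ ⊆ Q) (z ∈ kCyl r z₀),
    ENNReal.ofReal (|h z - h z₀| / r ^ β)

/-- Polynomial of kinetic degree at most 2. -/
def kpoly (a b : ℝ) (q : Fin d → ℝ) (M : Matrix (Fin d) (Fin d) ℝ) (z : Z d) : ℝ :=
  a + b * z.1 + ∑ i, q i * z.2.2 i + (1 / 2) * ∑ i, ∑ j, M i j * z.2.2 i * z.2.2 j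

/-- Kinetic Hölder seminorm of order `2 + α` on `Q`, by approximation with polynomials of
kinetic degree at most 2. -/
def kSemi2 (α : ℝ) (Q : Set (Z d)) (g : Z d → ℝ) : ℝ≥0∞ :=
  ⨆ (z₀ ∈ Q) (r : ℝ) (_ : 0 < r) (_ : kCyl r z₀ ⊆ Q),
    (⨅ (a : ℝ) (b : ℝ) (q : Fin d → ℝ) (M : Matrix (Fin d) (Fin d) ℝ),
      ⨆ z ∈ kCyl r z₀, ENNReal.ofReal |g z - kpoly a b q M z|)
      / ENNReal.ofReal (r ^ (2 + α))

/-- The standard Gaussian `μ(v) = (2π)^{−d/2} e^{−|v|²/2}`. -/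
def gaussμ (d : ℕ) (v : E d) : ℝ := (2 * π) ^ (-(d : ℝ) / 2) * Real.exp (-‖v‖ ^ 2 / 2)

/-- The local density coefficient `ℛ[g](t,x) = ∫ g(t,x,v) √μ(v) dv`. -/
def Rop (g : Z d → ℝ) (z : Z d) : ℝ := ∫ v : E d, g (z.1, z.2.1, v) * Real.sqrt (gaussμ d v)

/-- The collision operator `U[g] = Δ_v g + (d/2 − |v|²/4) g`. -/
def Uop (g : Z d → ℝ) (z : Z d) : ℝ :=
  (∑ i, pvv g i i z) + ((d : ℝ) / 2 - ‖z.2.2‖ ^ 2 / 4) * g z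

/-- `ℤ^d`-periodicity in the space variable. -/
def ZdPeriodic (g : Z d → ℝ) : Prop :=
  ∀ (z : Z d) (i : Fin d), g (z.1, z.2.1 + EuclideanSpace.single i (1 : ℝ), z.2.2) = g z

/-!
The function `√μ` is independent of `(t,x)` and lies in the kernel of `U`, so `f = g - C√μ` solves
`∂_t f + v·∇_x f = ℛ[g] U[f]`, which is linear once `ℛ[g]` is regarded as a given coefficient.
Where `f` plus a small barrier `ε e^{K(t-T)}` first vanishes, the transport derivative is `≤ 0` and
the velocity Hessian is `≥ 0`; if `ℛ[g] ≥ 0`, this contradicts the equation as soon as `K` beats the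
zeroth-order coefficient `ℛ[g] d/2`. Such a first contact exists by compactness: periodicity
confines `x`, and decay confines `v`.

The sign of `ℛ[g]` is itself part of the lower bound and is bootstrapped: as long as
`g ≥ C₁√μ - δ` one has `ℛ[g] ≥ C₁ - δ ∫ √μ`, which is `≥ 0` for small `δ`, and the barrier argument
with `ε ≤ δ` only uses the sign of `ℛ[g]` at such times. Once `g ≥ C₁√μ` holds, `ℛ[g] ≥ 0` and the
same argument applied to `C₂√μ - g` gives the upper bound.
-/

open Filter Topology Set

section OneVariable

lemma nonneg_of_continuousOn_Icc_of_nonneg_Ico {φ : ℝ → ℝ} {a b : ℝ} (hab : a < b)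
    (hφ : ContinuousOn φ (Icc a b)) (hnonneg : ∀ s ∈ Ico a b, 0 ≤ φ s) : 0 ≤ φ b := by
  have hlim : Tendsto φ (𝓝[Ico a b] b) (𝓝 (φ b)) :=
    (hφ b (right_mem_Icc.2 hab.le)).mono_left (nhdsWithin_mono b Ico_subset_Icc_self)
  rw [nhdsWithin_Ico_eq_nhdsLT hab] at hlim
  exact ge_of_tendsto hlim (mem_of_superset (Ico_mem_nhdsLT hab) hnonneg)

lemma deriv_nonpos_of_forall_Ioo_le {φ : ℝ → ℝ} {a b : ℝ} (hab : a < b)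
    (hmin : ∀ s ∈ Ioo a b, φ b ≤ φ s) : deriv φ b ≤ 0 := by
  by_cases hφ : DifferentiableAt ℝ φ b
  · have hslope : Tendsto (slope φ b) (𝓝[<] b) (𝓝 (deriv φ b)) :=
      (hasDerivAt_iff_tendsto_slope_left_right.1 hφ.hasDerivAt).1
    refine le_of_tendsto hslope (mem_of_superset (Ioo_mem_nhdsLT hab) fun s hs => ?_)
    rw [mem_ofPred_eq, slope_def_field]
    exact div_nonpos_of_nonneg_of_nonpos (sub_nonneg.2 (hmin s hs)) (sub_nonpos.2 hs.2.le)
  · exact (deriv_zero_of_not_differentiableAt hφ).le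

lemma deriv_deriv_nonneg_of_isLocalMin {φ : ℝ → ℝ} {a : ℝ} (hφ : ContinuousAt φ a)
    (hmin : IsLocalMin φ a) : 0 ≤ deriv (deriv φ) a := by
  by_contra! hneg
  have hmax : IsLocalMax φ a := isLocalMax_of_deriv_deriv_neg hneg hmin.deriv_eq_zero hφ
  have hconst : φ =ᶠ[𝓝 a] fun _ => φ a := by
    filter_upwards [hmin, hmax] with s hs₁ hs₂ using le_antisymm hs₂ hs₁
  have hzero : deriv (deriv φ) a = 0 := by simpa using hconst.deriv.deriv_eq
  exact hneg.ne hzero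

end OneVariable

section Gaussian

lemma integrable_exp_neg_mul_sq_norm {b : ℝ} (hb : 0 < b) :
    Integrable fun v : E d => rexp (-b * ‖v‖ ^ 2) := by
  refine Integrable.of_integral_ne_zero ?_
  rw [GaussianFourier.integral_rexp_neg_mul_sq_norm hb]
  positivity

lemma tendsto_exp_neg_sq_norm_div {b : ℝ} (hb : 0 < b) :
    Tendsto (fun v : E d => rexp (-‖v‖ ^ 2 / b)) (cocompact (E d)) (𝓝 0) := by
  refine tendsto_exp_atBot.comp ?_
  have hsq : Tendsto (fun v : E d => ‖v‖ ^ 2 / b) (cocompact (E d)) atTop :=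
    ((tendsto_pow_atTop two_ne_zero).comp tendsto_norm_cocompact_atTop).atTop_div_const hb
  simpa only [neg_div, Function.comp_def] using tendsto_neg_atTop_atBot.comp hsq

lemma gaussμ_nonneg (v : E d) : 0 ≤ gaussμ d v := by
  unfold gaussμ
  positivity

lemma sqrt_gaussμ (v : E d) :
    √(gaussμ d v) = √((2 * π) ^ (-(d : ℝ) / 2)) * rexp (-‖v‖ ^ 2 / 4) := by
  rw [gaussμ, sqrt_mul (by positivity), sqrt_eq_rpow (rexp _), ← exp_mul]
  ring_nf

lemma integrable_gaussμ : Integrable (gaussμ d) := by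
  refine ((integrable_exp_neg_mul_sq_norm (d := d) one_half_pos).const_mul
    ((2 * π) ^ (-(d : ℝ) / 2))).congr (.of_forall fun v => ?_)
  simp only [gaussμ]
  ring_nf

lemma integral_gaussμ : ∫ v : E d, gaussμ d v = 1 := by
  have hexp : ∀ v : E d, gaussμ d v = (2 * π) ^ (-(d : ℝ) / 2) * rexp (-(1 / 2) * ‖v‖ ^ 2) := by
    intro v
    rw [gaussμ]
    ring_nf
  simp only [hexp]
  rw [integral_const_mul, GaussianFourier.integral_rexp_neg_mul_sq_norm one_half_pos,
    finrank_euclideanSpace_fin, show π / (1 / 2) = 2 * π by ring, ← rpow_add two_pi_pos,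
    neg_div, neg_add_cancel, rpow_zero]

lemma integrable_sqrt_gaussμ : Integrable fun v : E d => √(gaussμ d v) := by
  simp only [sqrt_gaussμ]
  refine ((integrable_exp_neg_mul_sq_norm (d := d) (b := 1 / 4) (by norm_num)).congr
    (.of_forall fun v => ?_)).const_mul _
  ring_nf

lemma integral_sqrt_gaussμ_pos : 0 < ∫ v : E d, √(gaussμ d v) := by
  have hexp : ∀ v : E d,
      √(gaussμ d v) = √((2 * π) ^ (-(d : ℝ) / 2)) * rexp (-(1 / 4) * ‖v‖ ^ 2) := by
    intro v
    rw [sqrt_gaussμ]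
    ring_nf
  simp only [hexp]
  rw [integral_const_mul, GaussianFourier.integral_rexp_neg_mul_sq_norm (by norm_num)]
  positivity

lemma tendsto_sqrt_gaussμ_cocompact :
    Tendsto (fun v : E d => √(gaussμ d v)) (cocompact (E d)) (𝓝 0) := by
  simpa only [sqrt_gaussμ, mul_zero] using
    (tendsto_exp_neg_sq_norm_div four_pos).const_mul (√((2 * π) ^ (-(d : ℝ) / 2)))

lemma continuous_sqrt_gaussμ : Continuous fun v : E d => √(gaussμ d v) := by
  simp only [sqrt_gaussμ]
  fun_prop

end Gaussian

section VelocityLines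

/-- The restriction of `f` to the line through `z` in the velocity direction `e_i`, parametrised so
that `z` sits at `0`. Thus `pv f i z` is its derivative and `pvv f i i z` its second derivative
at `0`. -/
def velocityLine (f : Z d → ℝ) (z : Z d) (i : Fin d) (s : ℝ) : ℝ :=
  f (z.1, z.2.1, z.2.2 + s • EuclideanSpace.single i (1 : ℝ))

lemma velocityLine_add_apply (f : Z d → ℝ) (z : Z d) (i : Fin d) (s r : ℝ) :
    velocityLine f (z.1, z.2.1, z.2.2 + s • EuclideanSpace.single i (1 : ℝ)) i r =
      velocityLine f z i (s + r) := by
  simp only [velocityLine, add_assoc, ← add_smul]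

lemma velocityLine_pv (f : Z d → ℝ) (z : Z d) (i : Fin d) :
    velocityLine (pv f i) z i = deriv (velocityLine f z i) := by
  funext s
  calc velocityLine (pv f i) z i s
      = deriv (fun r => velocityLine f z i (s + r)) 0 := by
        simp only [← velocityLine_add_apply]
        rfl
    _ = deriv (velocityLine f z i) s := by rw [deriv_comp_const_add, add_zero]

lemma pvv_self_eq_deriv_deriv (f : Z d → ℝ) (i : Fin d) (z : Z d) :
    pvv f i i z = deriv (deriv (velocityLine f z i)) 0 := by
  rw [← velocityLine_pv]
  rfl

/-- The part of `KinReg` that concerns the velocity lines through `z`: along each of them `f` is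
differentiable, and twice differentiable at `z`. -/
structure VelocityTwiceDifferentiableAt (f : Z d → ℝ) (z : Z d) : Prop where
  differentiable : ∀ i, Differentiable ℝ (velocityLine f z i)
  differentiableAt_deriv : ∀ i, DifferentiableAt ℝ (deriv (velocityLine f z i)) 0

lemma KinReg.velocityTwiceDifferentiableAt {f : Z d → ℝ} {Q : Set (Z d)} (hf : KinReg f Q)
    {z : Z d} (hz : ∀ v, (z.1, z.2.1, v) ∈ Q) : VelocityTwiceDifferentiableAt f z where
  differentiable i s := by
    have hline : DifferentiableAt ℝ (fun r => velocityLine f z i (s + r)) 0 := by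
      simp only [← velocityLine_add_apply]
      exact hf.dv _ (hz (z.2.2 + s • EuclideanSpace.single i (1 : ℝ))) i
    rwa [differentiableAt_iff_comp_const_add (b := s), neg_add_cancel]
  differentiableAt_deriv i := by
    rw [← velocityLine_pv]
    exact hf.dvv _ (hz z.2.2) i i

lemma Uop_sub_const_mul {f g : Z d → ℝ} {z : Z d} (hf : VelocityTwiceDifferentiableAt f z)
    (hg : VelocityTwiceDifferentiableAt g z) (C : ℝ) :
    Uop (fun w => f w - C * g w) z = Uop f z - C * Uop g z := by
  have hpvv : ∀ i, pvv (fun w => f w - C * g w) i i z = pvv f i i z - C * pvv g i i z := by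
    intro i
    have hfst : deriv (velocityLine (fun w => f w - C * g w) z i) =
        fun s => deriv (velocityLine f z i) s - C * deriv (velocityLine g z i) s := by
      funext s
      exact ((hf.differentiable i s).hasDerivAt.sub
        ((hg.differentiable i s).hasDerivAt.const_mul C)).deriv
    rw [pvv_self_eq_deriv_deriv, pvv_self_eq_deriv_deriv, pvv_self_eq_deriv_deriv, hfst]
    exact ((hf.differentiableAt_deriv i).hasDerivAt.sub
      ((hg.differentiableAt_deriv i).hasDerivAt.const_mul C)).deriv
  simp only [Uop, hpvv, Finset.sum_sub_distrib, ← Finset.mul_sum]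
  ring

end VelocityLines

section Operators

lemma Yop_neg (f : Z d → ℝ) (z : Z d) : Yop (fun w => -f w) z = -Yop f z := by
  simp only [Yop, pt, px, deriv.fun_neg, mul_neg, Finset.sum_neg_distrib]
  ring

lemma Uop_neg (f : Z d → ℝ) (z : Z d) : Uop (fun w => -f w) z = -Uop f z := by
  have hpv : ∀ (h : Z d → ℝ) i, pv (fun w => -h w) i = fun w => -pv h i w := fun h i =>
    funext fun w => deriv.fun_neg
  simp only [Uop, pvv, hpv, Finset.sum_neg_distrib]
  ring

lemma Yop_sub_velocity (f : Z d → ℝ) (m : E d → ℝ) (z : Z d) :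
    Yop (fun w => f w - m w.2.2) z = Yop f z := by
  simp only [Yop, pt, px, deriv_sub_const]

lemma Yop_add_time {f : Z d → ℝ} {φ : ℝ → ℝ} {φ' : ℝ} {z : Z d}
    (hf : DifferentiableAt ℝ (fun s => f (s, z.2.1, z.2.2)) z.1) (hφ : HasDerivAt φ φ' z.1) :
    Yop (fun w => f w + φ w.1) z = Yop f z + φ' := by
  have hpt : pt (fun w => f w + φ w.1) z = pt f z + φ' := (hf.hasDerivAt.add hφ).deriv
  simp only [Yop, hpt, px, deriv_add_const]
  ring

lemma Uop_add_time (f : Z d → ℝ) (φ : ℝ → ℝ) (z : Z d) :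
    Uop (fun w => f w + φ w.1) z = Uop f z + (d / 2 - ‖z.2.2‖ ^ 2 / 4) * φ z.1 := by
  simp only [Uop, pvv, pv, deriv_add_const]
  ring

end Operators

section StationarySolution

lemma norm_add_smul_single_sq (v : E d) (i : Fin d) (s : ℝ) :
    ‖v + s • EuclideanSpace.single i (1 : ℝ)‖ ^ 2 = ‖v‖ ^ 2 + 2 * s * v i + s ^ 2 := by
  rw [norm_add_sq_real, inner_smul_right, norm_smul]
  simp [EuclideanSpace.inner_single_right]
  ring

lemma hasDerivAt_velocityLine_sqrt_gaussμ (z : Z d) (i : Fin d) (s : ℝ) :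
    HasDerivAt (velocityLine (fun w => √(gaussμ d w.2.2)) z i)
      (-(z.2.2 i + s) / 2 * velocityLine (fun w => √(gaussμ d w.2.2)) z i s) s := by
  have hline : velocityLine (fun w => √(gaussμ d w.2.2)) z i = fun r =>
      √((2 * π) ^ (-(d : ℝ) / 2)) * rexp (-(‖z.2.2‖ ^ 2 + 2 * r * z.2.2 i + r ^ 2) / 4) := by
    funext r
    simp only [velocityLine, sqrt_gaussμ, norm_add_smul_single_sq]
  rw [hline]
  have hexponent : HasDerivAt (fun r => -(‖z.2.2‖ ^ 2 + 2 * r * z.2.2 i + r ^ 2) / 4)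
      (-(z.2.2 i + s) / 2) s := by
    refine ((((((hasDerivAt_id s).const_mul 2).mul_const (z.2.2 i)).const_add
      (‖z.2.2‖ ^ 2)).add ((hasDerivAt_id s).pow 2)).neg.div_const 4).congr_deriv ?_
    simp only [id_eq]
    ring
  exact (hexponent.exp.const_mul _).congr_deriv (by ring)

lemma hasDerivAt_deriv_velocityLine_sqrt_gaussμ (z : Z d) (i : Fin d) :
    HasDerivAt (deriv (velocityLine (fun w => √(gaussμ d w.2.2)) z i))
      ((z.2.2 i ^ 2 / 4 - 1 / 2) * √(gaussμ d z.2.2)) 0 := by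
  rw [show deriv (velocityLine (fun w => √(gaussμ d w.2.2)) z i) = _ from
    funext fun s => (hasDerivAt_velocityLine_sqrt_gaussμ z i s).deriv]
  have hlinear : HasDerivAt (fun s => -(z.2.2 i + s) / 2) (-1 / 2) 0 :=
    ((hasDerivAt_id (0 : ℝ)).const_add (z.2.2 i)).neg.div_const 2
  refine (hlinear.mul (hasDerivAt_velocityLine_sqrt_gaussμ z i 0)).congr_deriv ?_
  simp only [velocityLine, zero_smul, add_zero]
  ring

lemma velocityTwiceDifferentiableAt_sqrt_gaussμ (z : Z d) :
    VelocityTwiceDifferentiableAt (fun w => √(gaussμ d w.2.2)) z where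
  differentiable i s := (hasDerivAt_velocityLine_sqrt_gaussμ z i s).differentiableAt
  differentiableAt_deriv i := (hasDerivAt_deriv_velocityLine_sqrt_gaussμ z i).differentiableAt

lemma Uop_sqrt_gaussμ (z : Z d) : Uop (fun w => √(gaussμ d w.2.2)) z = 0 := by
  have hpvv : ∀ i, pvv (fun w => √(gaussμ d w.2.2)) i i z =
      (z.2.2 i ^ 2 / 4 - 1 / 2) * √(gaussμ d z.2.2) := fun i => by
    rw [pvv_self_eq_deriv_deriv, (hasDerivAt_deriv_velocityLine_sqrt_gaussμ z i).deriv]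
  simp only [Uop, hpvv, ← Finset.sum_mul, Finset.sum_sub_distrib, ← Finset.sum_div,
    ← EuclideanSpace.real_norm_sq_eq, Finset.sum_const, Finset.card_univ, Fintype.card_fin,
    nsmul_eq_mul]
  ring

end StationarySolution

section Compactness

/-- The points of phase space-time whose time lies in `I`. -/
def timeSlab (I : Set ℝ) : Set (Z d) := {z | z.1 ∈ I}

/-- The regime `|v| → ∞`, uniformly in `t ∈ [0,T]` and `x`. -/
def velocityInfinity (T : ℝ) : Filter (Z d) :=
  comap (fun z => z.2.2) (cocompact (E d)) ⊓ 𝓟 (timeSlab (Icc 0 T))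

/-- A compact part of the slab `[0,T] × ℝ^d × {|v| ≤ ρ}` that meets every `ℤ^d`-orbit: the ball of
radius `d` contains the unit cube. -/
def periodCell (T ρ : ℝ) : Set (Z d) :=
  Icc 0 T ×ˢ Metric.closedBall (0 : E d) d ×ˢ Metric.closedBall (0 : E d) ρ

lemma isCompact_periodCell (T ρ : ℝ) : IsCompact (periodCell T ρ : Set (Z d)) :=
  isCompact_Icc.prod ((isCompact_closedBall _ _).prod (isCompact_closedBall _ _))

lemma periodCell_subset_timeSlab (T ρ : ℝ) :
    (periodCell T ρ : Set (Z d)) ⊆ timeSlab (Icc 0 T) := fun _ hz => hz.1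

lemma exists_velocity_bound_of_eventually {T : ℝ} {P : Z d → Prop}
    (hP : ∀ᶠ z in velocityInfinity T, P z) :
    ∃ ρ, ∀ z ∈ timeSlab (Icc 0 T), ¬P z → ‖z.2.2‖ ≤ ρ := by
  rw [velocityInfinity, eventually_inf_principal, ← Metric.cobounded_eq_cocompact,
    ← comap_norm_atTop, comap_comap, eventually_comap] at hP
  obtain ⟨ρ, hρ⟩ := eventually_atTop.1 hP
  refine ⟨ρ, fun z hz hPz => ?_⟩
  by_contra! hlt
  exact hPz (hρ _ hlt.le z rfl hz)

lemma tendsto_velocity_velocityInfinity (T : ℝ) :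
    Tendsto (fun z : Z d => z.2.2) (velocityInfinity T) (cocompact (E d)) :=
  tendsto_comap.mono_left inf_le_left

lemma tendsto_sqrt_gaussμ_velocityInfinity (T : ℝ) :
    Tendsto (fun z : Z d => √(gaussμ d z.2.2)) (velocityInfinity T) (𝓝 0) :=
  tendsto_sqrt_gaussμ_cocompact.comp (tendsto_velocity_velocityInfinity T)

lemma tendsto_velocityInfinity_of_abs_le_exp {f : Z d → ℝ} {T b C : ℝ} (hb : 0 < b)
    (hf : ∀ z ∈ timeSlab (Icc 0 T), |f z| ≤ C * rexp (-‖z.2.2‖ ^ 2 / b)) :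
    Tendsto f (velocityInfinity T) (𝓝 0) := by
  have hexp : Tendsto (fun z : Z d => C * rexp (-‖z.2.2‖ ^ 2 / b)) (velocityInfinity T) (𝓝 0) := by
    simpa only [mul_zero, Function.comp_def] using
      ((tendsto_exp_neg_sq_norm_div hb).comp (tendsto_velocity_velocityInfinity T)).const_mul C
  exact squeeze_zero_norm' ((eventually_principal.2 hf).filter_mono inf_le_right) hexp

lemma ZdPeriodic.apply_add_of_mem_span {f : Z d → ℝ} (hf : ZdPeriodic f) {u : E d}
    (hu : u ∈ Submodule.span ℤ (range (EuclideanSpace.basisFun (Fin d) ℝ).toBasis)) (z : Z d) :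
    f (z.1, z.2.1 + u, z.2.2) = f z := by
  have hperiodic : Function.Periodic (fun x => f (z.1, x, z.2.2)) u := by
    induction hu using Submodule.span_induction with
    | mem u hu =>
      obtain ⟨i, rfl⟩ := hu
      intro x
      simpa using hf (z.1, x, z.2.2) i
    | zero => exact fun x => by simp
    | add u w _ _ hu hw => exact hu.add_period hw
    | smul n u _ hu => exact hu.zsmul n
  exact hperiodic z.2.1

lemma ZdPeriodic.exists_mem_periodCell {f : Z d → ℝ} (hf : ZdPeriodic f) {T ρ : ℝ} {z : Z d}
    (hz : z ∈ timeSlab (Icc 0 T)) (hv : ‖z.2.2‖ ≤ ρ) :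
    ∃ w ∈ periodCell T ρ, w.1 = z.1 ∧ f w = f z := by
  set b := (EuclideanSpace.basisFun (Fin d) ℝ).toBasis
  have hfract : ‖ZSpan.fract b z.2.1‖ ≤ d := by
    simpa [b] using ZSpan.norm_fract_le b z.2.1
  refine ⟨(z.1, ZSpan.fract b z.2.1, z.2.2), ⟨hz, by simpa using hfract, by simpa using hv⟩,
    rfl, ?_⟩
  rw [ZSpan.fract_apply, sub_eq_add_neg]
  exact hf.apply_add_of_mem_span (neg_mem (ZSpan.floor b z.2.1).2) z

lemma ZdPeriodic.exists_abs_le {f : Z d → ℝ} {T : ℝ} (hf : ZdPeriodic f)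
    (hcont : ContinuousOn f (timeSlab (Icc 0 T)))
    (hlim : Tendsto f (velocityInfinity T) (𝓝 0)) :
    ∃ B, ∀ z ∈ timeSlab (Icc 0 T), |f z| ≤ B := by
  obtain ⟨ρ, hρ⟩ := exists_velocity_bound_of_eventually
    (hlim.abs.eventually_le_const (by simp : |(0 : ℝ)| < 1))
  obtain ⟨B, hB⟩ := (isCompact_periodCell T ρ).exists_bound_of_continuousOn
    (hcont.mono (periodCell_subset_timeSlab T ρ))
  refine ⟨max 1 B, fun z hz => ?_⟩
  by_cases hsmall : |f z| ≤ 1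
  · exact hsmall.trans (le_max_left _ _)
  · obtain ⟨w, hw, -, hfw⟩ := hf.exists_mem_periodCell hz (hρ z hz hsmall)
    rw [← hfw]
    exact (hB w hw).trans (le_max_right _ _)

lemma ZdPeriodic.exists_first_nonpos {h : Z d → ℝ} {T : ℝ} (hper : ZdPeriodic h)
    (hcont : ContinuousOn h (timeSlab (Icc 0 T))) (hinf : ∀ᶠ z in velocityInfinity T, 0 < h z)
    (hnonpos : ∃ z ∈ timeSlab (Icc 0 T), h z ≤ 0) :
    ∃ z ∈ timeSlab (Icc 0 T), h z ≤ 0 ∧ ∀ w ∈ timeSlab (Icc 0 T), w.1 < z.1 → 0 < h w := by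
  obtain ⟨ρ, hρ⟩ := exists_velocity_bound_of_eventually hinf
  have hcompact : IsCompact (periodCell T ρ ∩ h ⁻¹' Iic 0) :=
    (isCompact_periodCell T ρ).of_isClosed_subset
      ((hcont.mono (periodCell_subset_timeSlab T ρ)).preimage_isClosed_of_isClosed
        (isCompact_periodCell T ρ).isClosed isClosed_Iic) inter_subset_left
  have hreduce : ∀ w ∈ timeSlab (Icc 0 T), h w ≤ 0 →
      ∃ w' ∈ periodCell T ρ ∩ h ⁻¹' Iic 0, w'.1 = w.1 := by
    intro w hw hle
    obtain ⟨w', hw', htime, heq⟩ := hper.exists_mem_periodCell hw (hρ w hw hle.not_gt)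
    exact ⟨w', ⟨hw', heq.trans_le hle⟩, htime⟩
  obtain ⟨z₁, hz₁, hle₁⟩ := hnonpos
  obtain ⟨z₂, hz₂, -⟩ := hreduce z₁ hz₁ hle₁
  obtain ⟨z, ⟨hz, hle⟩, hmin⟩ := hcompact.exists_isMinOn ⟨z₂, hz₂⟩ continuous_fst.continuousOn
  refine ⟨z, periodCell_subset_timeSlab T ρ hz, hle, fun w hw hlt => ?_⟩
  by_contra! hwle
  obtain ⟨w', hw', htime⟩ := hreduce w hw hwle
  exact (htime.trans_lt hlt).not_ge (hmin hw')

lemma ZdPeriodic.exists_first_zero {h : Z d → ℝ} {T : ℝ} (hper : ZdPeriodic h)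
    (hcont : ContinuousOn h (timeSlab (Icc 0 T))) (hinf : ∀ᶠ z in velocityInfinity T, 0 < h z)
    (hinit : ∀ x v, 0 < h (0, x, v)) (hnonpos : ∃ z ∈ timeSlab (Icc 0 T), h z ≤ 0) :
    ∃ z ∈ timeSlab (Ioc 0 T), h z = 0 ∧ ∀ w ∈ timeSlab (Icc 0 z.1), 0 ≤ h w := by
  obtain ⟨z, hz, hle, hbefore⟩ := hper.exists_first_nonpos hcont hinf hnonpos
  have htime : 0 < z.1 := hz.1.lt_of_ne fun hzero =>
    (hinit z.2.1 z.2.2).not_ge (hzero ▸ hle)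
  have hnonneg : ∀ w ∈ timeSlab (Icc 0 z.1), 0 ≤ h w := by
    rintro ⟨t, x, v⟩ ⟨ht₀, htz⟩
    rcases htz.lt_or_eq with hlt | rfl
    · exact (hbefore _ ⟨ht₀, htz.trans hz.2⟩ hlt).le
    · refine nonneg_of_continuousOn_Icc_of_nonneg_Ico (φ := fun s => h (s, x, v)) htime
        (hcont.comp (by fun_prop) fun s hs => ⟨hs.1, hs.2.trans hz.2⟩) fun s hs => ?_
      exact (hbefore (s, x, v) ⟨hs.1, hs.2.le.trans hz.2⟩ hs.2).le
  exact ⟨z, ⟨htime, hz.2⟩, hle.antisymm (hnonneg z ⟨hz.1, le_rfl⟩), hnonneg⟩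

end Compactness

section MaximumPrinciple

-- `deriv` is `0` where the derivative does not exist, and the first-order tests remain true there.
lemma Yop_nonpos_of_forall_le {h : Z d → ℝ} {z : Z d} (hz : 0 < z.1)
    (hmin : ∀ w ∈ timeSlab (Icc 0 z.1), h z ≤ h w) : Yop h z ≤ 0 := by
  have hpx : ∀ i, px h i z = 0 := fun i => by
    refine IsLocalMin.deriv_eq_zero (.of_forall fun s => ?_)
    simpa using hmin (z.1, z.2.1 + s • EuclideanSpace.single i (1 : ℝ), z.2.2) ⟨hz.le, le_rfl⟩
  have hpt : pt h z ≤ 0 := deriv_nonpos_of_forall_Ioo_le hz fun s hs =>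
    hmin (s, z.2.1, z.2.2) ⟨hs.1.le, hs.2.le⟩
  simpa [Yop, hpx] using hpt

lemma Uop_nonneg_of_forall_nonneg {h : Z d → ℝ} {z : Z d}
    (hcont : ∀ i, ContinuousAt (velocityLine h z i) 0) (hz : h z = 0)
    (hmin : ∀ v, 0 ≤ h (z.1, z.2.1, v)) : 0 ≤ Uop h z := by
  have hpvv : ∀ i, 0 ≤ pvv h i i z := fun i => by
    rw [pvv_self_eq_deriv_deriv]
    refine deriv_deriv_nonneg_of_isLocalMin (hcont i) (.of_forall fun s => ?_)
    simpa [velocityLine, hz] using hmin (z.2.2 + s • EuclideanSpace.single i (1 : ℝ))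
  simpa [Uop, hz] using Finset.sum_nonneg fun i _ => hpvv i

lemma pos_of_strict_supersolution {h a : Z d → ℝ} {T : ℝ} (hper : ZdPeriodic h)
    (hcont : ContinuousOn h (timeSlab (Icc 0 T))) (hinf : ∀ᶠ z in velocityInfinity T, 0 < h z)
    (hinit : ∀ x v, 0 < h (0, x, v))
    (hstrict : ∀ z ∈ timeSlab (Ioc 0 T), (∀ x v, 0 ≤ h (z.1, x, v)) →
      0 ≤ a z ∧ a z * Uop h z < Yop h z) :
    ∀ z ∈ timeSlab (Icc 0 T), 0 < h z := by
  by_contra! hnonpos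
  obtain ⟨z, hz, hzero, hnonneg⟩ := hper.exists_first_zero hcont hinf hinit hnonpos
  have hslice : ∀ x v, 0 ≤ h (z.1, x, v) := fun x v => hnonneg (z.1, x, v) ⟨hz.1.le, le_rfl⟩
  have hvcont : ∀ i, ContinuousAt (velocityLine h z i) 0 := fun i =>
    (hcont.comp_continuous (f := fun s => (z.1, z.2.1, z.2.2 + s • EuclideanSpace.single i (1 : ℝ)))
      (by fun_prop) fun _ => Ioc_subset_Icc_self hz).continuousAt
  have hY : Yop h z ≤ 0 :=
    Yop_nonpos_of_forall_le hz.1 fun w hw => hzero.trans_le (hnonneg w hw)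
  have hU : 0 ≤ Uop h z := Uop_nonneg_of_forall_nonneg hvcont hzero fun v => hslice z.2.1 v
  obtain ⟨ha, hlt⟩ := hstrict z hz hslice
  exact (mul_nonneg ha hU).not_gt (hlt.trans_le hY)

lemma mul_Uop_add_exp_lt_Yop {f : Z d → ℝ} {z : Z d} {a A ε T : ℝ} (ha : 0 ≤ a) (haA : a ≤ A)
    (hε : 0 < ε) (hdt : DifferentiableAt ℝ (fun s => f (s, z.2.1, z.2.2)) z.1)
    (hsuper : a * Uop f z ≤ Yop f z) :
    a * Uop (fun w => f w + ε * rexp ((A * (d / 2) + 1) * (w.1 - T))) z <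
      Yop (fun w => f w + ε * rexp ((A * (d / 2) + 1) * (w.1 - T))) z := by
  set K := A * (d / 2) + 1
  set e := ε * rexp (K * (z.1 - T))
  have : 0 < e := by positivity
  have hbarrier : HasDerivAt (fun t => ε * rexp (K * (t - T))) (K * e) z.1 := by
    refine ((((hasDerivAt_id z.1).sub_const T).const_mul K).exp.const_mul ε).congr_deriv ?_
    simp only [id_eq, e]
    ring
  rw [Yop_add_time hdt hbarrier, Uop_add_time f fun t => ε * rexp (K * (t - T))]
  calc a * (Uop f z + (d / 2 - ‖z.2.2‖ ^ 2 / 4) * e)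
      ≤ a * (Uop f z + d / 2 * e) := by
        gcongr
        exact sub_le_self _ (by positivity)
    _ = a * Uop f z + a * (d / 2) * e := by ring
    _ ≤ Yop f z + A * (d / 2) * e := by gcongr
    _ < Yop f z + K * e := by
        gcongr
        exact lt_add_one _

lemma pos_add_exp_of_supersolution {f a : Z d → ℝ} {T A δ : ℝ} (hδ : 0 < δ) (hA : 0 ≤ A)
    (hper : ZdPeriodic f) (hcont : ContinuousOn f (timeSlab (Icc 0 T)))
    (hlim : Tendsto f (velocityInfinity T) (𝓝 0))
    (hdt : ∀ z ∈ timeSlab (Ioo 0 T), DifferentiableAt ℝ (fun s => f (s, z.2.1, z.2.2)) z.1)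
    (haA : ∀ z ∈ timeSlab (Ioo 0 T), a z ≤ A)
    (ha : ∀ z ∈ timeSlab (Ioo 0 T), (∀ x v, -δ ≤ f (z.1, x, v)) → 0 ≤ a z)
    (hsuper : ∀ z ∈ timeSlab (Ioo 0 T), a z * Uop f z ≤ Yop f z)
    (hinit : ∀ x v, 0 ≤ f (0, x, v)) {z : Z d} (hz : z ∈ timeSlab (Ico 0 T)) :
    0 < f z + δ * rexp ((A * (d / 2) + 1) * (z.1 - T)) := by
  set K := A * (d / 2) + 1
  have hIcc : timeSlab (Icc 0 z.1) ⊆ (timeSlab (Icc 0 T) : Set (Z d)) :=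
    fun w hw => ⟨hw.1, hw.2.trans hz.2.le⟩
  have hIoc : timeSlab (Ioc 0 z.1) ⊆ (timeSlab (Ioo 0 T) : Set (Z d)) :=
    fun w hw => ⟨hw.1, hw.2.trans_lt hz.2⟩
  have hexp_le_one : ∀ w ∈ timeSlab (Ioc 0 z.1), rexp (K * (w.1 - T)) ≤ 1 := fun w hw =>
    exp_le_one_iff.2 <|
      mul_nonpos_of_nonneg_of_nonpos (by positivity) (sub_nonpos.2 (hIoc hw).2.le)
  have hinf : ∀ᶠ w in velocityInfinity z.1, 0 < f w + δ * rexp (K * (w.1 - T)) := by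
    have hbarrier : -(δ * rexp (K * -T)) < 0 := by
      rw [neg_lt_zero]
      positivity
    have hmono : velocityInfinity z.1 ≤ (velocityInfinity T : Filter (Z d)) :=
      inf_le_inf_left _ (principal_mono.2 hIcc)
    have htime : ∀ᶠ w : Z d in velocityInfinity z.1, 0 ≤ w.1 :=
      (eventually_principal.2 fun w hw => hw.1).filter_mono inf_le_right
    filter_upwards [(hlim.mono_left hmono).eventually_const_lt hbarrier, htime] with w hw hw₀
    have hle : δ * rexp (K * -T) ≤ δ * rexp (K * (w.1 - T)) := by
      gcongr
      linarith
    linarith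
  refine pos_of_strict_supersolution (h := fun w => f w + δ * rexp (K * (w.1 - T))) (a := a)
    (fun w i => congrArg (· + δ * rexp (K * (w.1 - T))) (hper w i))
    ((hcont.mono hIcc).add (by fun_prop)) hinf
    (fun x v => add_pos_of_nonneg_of_pos (hinit x v) (by positivity))
    (fun w hw hslice => ?_) z ⟨hz.1, le_rfl⟩
  have hnonneg : 0 ≤ a w := by
    refine ha w (hIoc hw) fun x v => ?_
    linarith [hslice x v, mul_le_of_le_one_right hδ.le (hexp_le_one w hw)]
  exact ⟨hnonneg, mul_Uop_add_exp_lt_Yop hnonneg (haA w (hIoc hw)) hδ (hdt w (hIoc hw))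
    (hsuper w (hIoc hw))⟩

/-- A weak maximum principle for `∂_t f + v·∇_x f ≥ a U[f]` in which the sign of `a` is only known
at times where `f ≥ -δ` already holds. -/
lemma nonneg_of_supersolution {f a : Z d → ℝ} {T A δ : ℝ} (hδ : 0 < δ) (hA : 0 ≤ A)
    (hper : ZdPeriodic f) (hcont : ContinuousOn f (timeSlab (Icc 0 T)))
    (hlim : Tendsto f (velocityInfinity T) (𝓝 0))
    (hdt : ∀ z ∈ timeSlab (Ioo 0 T), DifferentiableAt ℝ (fun s => f (s, z.2.1, z.2.2)) z.1)
    (haA : ∀ z ∈ timeSlab (Ioo 0 T), a z ≤ A)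
    (ha : ∀ z ∈ timeSlab (Ioo 0 T), (∀ x v, -δ ≤ f (z.1, x, v)) → 0 ≤ a z)
    (hsuper : ∀ z ∈ timeSlab (Ioo 0 T), a z * Uop f z ≤ Yop f z)
    (hinit : ∀ x v, 0 ≤ f (0, x, v)) {z : Z d} (hz : z ∈ timeSlab (Icc 0 T)) : 0 ≤ f z := by
  have hIco : ∀ z ∈ timeSlab (Ico 0 T), 0 ≤ f z := by
    intro z hz
    by_contra! hneg
    set ε := min δ (-f z)
    have hε : 0 < ε := lt_min hδ (neg_pos.2 hneg)
    have hpos := pos_add_exp_of_supersolution hε hA hper hcont hlim hdt haA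
      (fun w hw hslice => ha w hw fun x v =>
        (neg_le_neg (min_le_left δ (-f z))).trans (hslice x v)) hsuper hinit hz
    have hexp : rexp ((A * (d / 2) + 1) * (z.1 - T)) ≤ 1 := exp_le_one_iff.2 <|
      mul_nonpos_of_nonneg_of_nonpos (by positivity) (sub_nonpos.2 hz.2.le)
    linarith [mul_le_of_le_one_right hε.le hexp, min_le_right δ (-f z)]
  obtain ⟨t, x, v⟩ := z
  rcases hz.1.eq_or_lt with rfl | ht
  · exact hinit x v
  · exact nonneg_of_continuousOn_Icc_of_nonneg_Ico (φ := fun s => f (s, x, v)) ht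
      (hcont.comp (by fun_prop) fun s hs => ⟨hs.1, hs.2.trans hz.2⟩)
      fun s hs => hIco (s, x, v) ⟨hs.1, hs.2.trans_le hz.2⟩

end MaximumPrinciple

section LocalDensity

variable {g : Z d → ℝ} {z : Z d} {B : ℝ}

lemma Rop_nonneg (hg : ∀ v, 0 ≤ g (z.1, z.2.1, v)) : 0 ≤ Rop g z :=
  integral_nonneg fun v => mul_nonneg (hg v) (sqrt_nonneg _)

lemma integrable_mul_sqrt_gaussμ {φ : E d → ℝ} (hφ : Continuous φ) (hB : ∀ v, |φ v| ≤ B) :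
    Integrable fun v => φ v * √(gaussμ d v) :=
  integrable_sqrt_gaussμ.bdd_mul hφ.aestronglyMeasurable (.of_forall hB)

lemma Rop_le_of_abs_le (hcont : Continuous fun v => g (z.1, z.2.1, v))
    (hB : ∀ v, |g (z.1, z.2.1, v)| ≤ B) : Rop g z ≤ B * ∫ v : E d, √(gaussμ d v) := by
  rw [← integral_const_mul]
  refine integral_mono (integrable_mul_sqrt_gaussμ hcont hB)
    (integrable_sqrt_gaussμ.const_mul B) fun v => ?_
  exact mul_le_mul_of_nonneg_right ((le_abs_self _).trans (hB v)) (sqrt_nonneg _)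

lemma sub_le_Rop {C δ : ℝ} (hcont : Continuous fun v => g (z.1, z.2.1, v))
    (hB : ∀ v, |g (z.1, z.2.1, v)| ≤ B)
    (hlow : ∀ v, C * √(gaussμ d v) - δ ≤ g (z.1, z.2.1, v)) :
    C - δ * ∫ v : E d, √(gaussμ d v) ≤ Rop g z := by
  have hμ := (integrable_gaussμ (d := d)).const_mul C
  have hsqrt := (integrable_sqrt_gaussμ (d := d)).const_mul δ
  calc C - δ * ∫ v : E d, √(gaussμ d v)
      = ∫ v : E d, (C * gaussμ d v - δ * √(gaussμ d v)) := by
        rw [integral_sub hμ hsqrt, integral_const_mul, integral_const_mul, integral_gaussμ, mul_one]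
    _ ≤ Rop g z := by
        refine integral_mono (hμ.sub hsqrt) (integrable_mul_sqrt_gaussμ hcont hB) fun v => ?_
        calc C * gaussμ d v - δ * √(gaussμ d v)
            = (C * √(gaussμ d v) - δ) * √(gaussμ d v) := by
              rw [sub_mul, mul_assoc, mul_self_sqrt (gaussμ_nonneg v)]
          _ ≤ g (z.1, z.2.1, v) * √(gaussμ d v) :=
              mul_le_mul_of_nonneg_right (hlow v) (sqrt_nonneg _)

end LocalDensity

section ToyModel

/-- A classical solution on `[0,T]` of the toy model `∂_t g + v·∇_x g = ℛ[g] U[g]` that is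
`ℤ^d`-periodic in `x` and tends to `0` as `|v| → ∞`, uniformly in `(t,x)`. -/
structure ToySolution (T : ℝ) (g : Z d → ℝ) : Prop where
  periodic : ZdPeriodic g
  continuousOn : ContinuousOn g (timeSlab (Icc 0 T))
  kinReg : KinReg g (timeSlab (Ioo 0 T))
  pde : ∀ z ∈ timeSlab (Ioo 0 T), Yop g z = Rop g z * Uop g z
  tendsto_zero : Tendsto g (velocityInfinity T) (𝓝 0)

namespace ToySolution

variable {T : ℝ} {g : Z d → ℝ}

lemma continuous_velocity (hg : ToySolution T g) {z : Z d} (hz : z ∈ timeSlab (Icc 0 T)) :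
    Continuous fun v => g (z.1, z.2.1, v) :=
  hg.continuousOn.comp_continuous (by fun_prop) fun _ => hz

lemma exists_Rop_le (hg : ToySolution T g) :
    ∃ A, 0 ≤ A ∧ ∀ z ∈ timeSlab (Ioo 0 T), Rop g z ≤ A := by
  obtain ⟨B, hB⟩ := hg.periodic.exists_abs_le hg.continuousOn hg.tendsto_zero
  refine ⟨|B| * ∫ v : E d, √(gaussμ d v), by have := integral_sqrt_gaussμ_pos (d := d); positivity,
    fun z hz => ?_⟩
  exact Rop_le_of_abs_le (hg.continuous_velocity (Ioo_subset_Icc_self hz)) fun v =>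
    (hB (z.1, z.2.1, v) (Ioo_subset_Icc_self hz)).trans (le_abs_self B)

lemma Rop_nonneg_of_lower_bound (hg : ToySolution T g) {C δ : ℝ}
    (hδ : δ * ∫ v : E d, √(gaussμ d v) ≤ C) {z : Z d} (hz : z ∈ timeSlab (Icc 0 T))
    (hlow : ∀ v, -δ ≤ g (z.1, z.2.1, v) - C * √(gaussμ d v)) : 0 ≤ Rop g z := by
  obtain ⟨B, hB⟩ := hg.periodic.exists_abs_le hg.continuousOn hg.tendsto_zero
  refine (sub_nonneg.2 hδ).trans (sub_le_Rop (hg.continuous_velocity hz)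
    (fun v => hB (z.1, z.2.1, v) hz) fun v => ?_)
  linarith [hlow v]

/-- `√μ` is stationary for the transport and lies in the kernel of `U`, so the difference solves the
same equation, now linear with the given coefficient `ℛ[g]`. -/
lemma Yop_sub_sqrt_gaussμ (hg : ToySolution T g) (C : ℝ) {z : Z d}
    (hz : z ∈ timeSlab (Ioo 0 T)) :
    Yop (fun w => g w - C * √(gaussμ d w.2.2)) z =
      Rop g z * Uop (fun w => g w - C * √(gaussμ d w.2.2)) z := by
  rw [Yop_sub_velocity g fun v => C * √(gaussμ d v), hg.pde z hz,
    Uop_sub_const_mul (hg.kinReg.velocityTwiceDifferentiableAt fun _ => hz)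
      (velocityTwiceDifferentiableAt_sqrt_gaussμ z), Uop_sqrt_gaussμ, mul_zero, sub_zero]

lemma continuousOn_sub_sqrt_gaussμ (hg : ToySolution T g) (C : ℝ) :
    ContinuousOn (fun w => g w - C * √(gaussμ d w.2.2)) (timeSlab (Icc 0 T)) :=
  hg.continuousOn.sub
    (continuous_const.mul (continuous_sqrt_gaussμ.comp (by fun_prop))).continuousOn

lemma tendsto_sub_sqrt_gaussμ (hg : ToySolution T g) (C : ℝ) :
    Tendsto (fun w => g w - C * √(gaussμ d w.2.2)) (velocityInfinity T) (𝓝 0) := by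
  simpa using hg.tendsto_zero.sub ((tendsto_sqrt_gaussμ_velocityInfinity T).const_mul C)

lemma mul_sqrt_gaussμ_le (hg : ToySolution T g) {C : ℝ} (hC : 0 < C)
    (hinit : ∀ x v, C * √(gaussμ d v) ≤ g (0, x, v)) {z : Z d} (hz : z ∈ timeSlab (Icc 0 T)) :
    C * √(gaussμ d z.2.2) ≤ g z := by
  obtain ⟨A, hA, hRA⟩ := hg.exists_Rop_le
  have hmass := integral_sqrt_gaussμ_pos (d := d)
  refine sub_nonneg.1 (nonneg_of_supersolution (div_pos hC hmass) hA
    (fun w i => congrArg (· - C * √(gaussμ d w.2.2)) (hg.periodic w i))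
    (hg.continuousOn_sub_sqrt_gaussμ C) (hg.tendsto_sub_sqrt_gaussμ C)
    (fun w hw => (hg.kinReg.dt w hw).sub_const (C * √(gaussμ d w.2.2))) hRA (fun w hw hlow => ?_)
    (fun w hw => (hg.Yop_sub_sqrt_gaussμ C hw).ge) (fun x v => sub_nonneg.2 (hinit x v)) hz)
  exact hg.Rop_nonneg_of_lower_bound (div_mul_cancel₀ C hmass.ne').le (Ioo_subset_Icc_self hw)
    (hlow w.2.1)

lemma le_mul_sqrt_gaussμ (hg : ToySolution T g) {C : ℝ}
    (hR : ∀ z ∈ timeSlab (Ioo 0 T), 0 ≤ Rop g z)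
    (hinit : ∀ x v, g (0, x, v) ≤ C * √(gaussμ d v)) {z : Z d} (hz : z ∈ timeSlab (Icc 0 T)) :
    g z ≤ C * √(gaussμ d z.2.2) := by
  obtain ⟨A, hA, hRA⟩ := hg.exists_Rop_le
  refine sub_nonpos.1 (neg_nonneg.1 (nonneg_of_supersolution
    (f := fun w => -(g w - C * √(gaussμ d w.2.2))) one_pos hA
    (fun w i => congrArg (fun r => -(r - C * √(gaussμ d w.2.2))) (hg.periodic w i))
    (hg.continuousOn_sub_sqrt_gaussμ C).fun_neg
    (by simpa only [neg_zero] using (hg.tendsto_sub_sqrt_gaussμ C).neg)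
    (fun w hw => ((hg.kinReg.dt w hw).sub_const (C * √(gaussμ d w.2.2))).fun_neg)
    hRA (fun w hw _ => hR w hw)
    (fun w hw => ?_) (fun x v => neg_nonneg.2 (sub_nonpos.2 (hinit x v))) hz))
  rw [Uop_neg, Yop_neg, mul_neg, hg.Yop_sub_sqrt_gaussμ C hw]

end ToySolution

theorem toy_model_gaussian_bounds_general {T C₁ C₂ : ℝ} {g : Z d → ℝ} (hC₁ : 0 < C₁)
    (hg : ToySolution T g)
    (hinit : ∀ x v : E d, C₁ * √(gaussμ d v) ≤ g (0, x, v) ∧ g (0, x, v) ≤ C₂ * √(gaussμ d v)) :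
    ∀ z : Z d, 0 ≤ z.1 → z.1 ≤ T →
      C₁ * √(gaussμ d z.2.2) ≤ g z ∧ g z ≤ C₂ * √(gaussμ d z.2.2) := by
  have hlower : ∀ z ∈ timeSlab (Icc 0 T), C₁ * √(gaussμ d z.2.2) ≤ g z := fun z hz =>
    hg.mul_sqrt_gaussμ_le hC₁ (fun x v => (hinit x v).1) hz
  have hdensity : ∀ z ∈ timeSlab (Ioo 0 T), 0 ≤ Rop g z := fun z hz => Rop_nonneg fun v =>
    (by positivity : 0 ≤ C₁ * √(gaussμ d v)).trans
      (hlower (z.1, z.2.1, v) (Ioo_subset_Icc_self hz))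
  exact fun z hz₀ hzT => ⟨hlower z ⟨hz₀, hzT⟩,
    hg.le_mul_sqrt_gaussμ hdensity (fun x v => (hinit x v).2) ⟨hz₀, hzT⟩⟩

end ToyModel

/-- **Gaussian bounds for the toy model**: if a solution of
`∂_t g + v·∇_x g = ℛ[g] U[g]` on `[0,T]` (with Gaussian decay of `g` and its first two
derivatives) satisfies `C₁√μ ≤ g(0,·,·) ≤ C₂√μ`, then `C₁√μ ≤ g(t,·,·) ≤ C₂√μ` for all
`t ∈ [0,T]`. -/
theorem toy_model_gaussian_bounds
    (d : ℕ) (hd : 1 ≤ d) (T C₁ C₂ : ℝ) (hT : 0 < T) (h1 : 0 < C₁) (h12 : C₁ ≤ C₂)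
    (g : Z d → ℝ)
    (hper : ZdPeriodic g)
    (hcont : ContinuousOn g {z : Z d | 0 ≤ z.1 ∧ z.1 ≤ T})
    (hreg : KinReg g {z : Z d | 0 < z.1 ∧ z.1 < T})
    (hpde : ∀ z : Z d, 0 < z.1 → z.1 < T → Yop g z = Rop g z * Uop g z)
    (hdecay : ∃ C₃ : ℝ, 0 < C₃ ∧ ∀ z : Z d, 0 ≤ z.1 → z.1 ≤ T →
      |g z| + gradvNorm g z + hessvNorm g z + Real.sqrt (∑ i, (px g i z) ^ 2)
        ≤ C₃ * Real.exp (-‖z.2.2‖ ^ 2 / 8))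
    (hinit : ∀ x v : E d, C₁ * Real.sqrt (gaussμ d v) ≤ g (0, x, v) ∧
      g (0, x, v) ≤ C₂ * Real.sqrt (gaussμ d v)) :
    ∀ z : Z d, 0 ≤ z.1 → z.1 ≤ T →
      C₁ * Real.sqrt (gaussμ d z.2.2) ≤ g z ∧ g z ≤ C₂ * Real.sqrt (gaussμ d z.2.2) := by
  obtain ⟨C₃, -, hdecay⟩ := hdecay
  have hlim : Tendsto g (velocityInfinity T) (𝓝 0) := by
    refine tendsto_velocityInfinity_of_abs_le_exp (b := 8) (C := C₃) (by norm_num) fun z hz => ?_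
    refine le_trans ?_ (hdecay z hz.1 hz.2)
    have hgrad : 0 ≤ gradvNorm g z := sqrt_nonneg _
    have hhess : 0 ≤ hessvNorm g z := sqrt_nonneg _
    linarith [sqrt_nonneg (∑ i, px g i z ^ 2)]
  exact toy_model_gaussian_bounds_general h1
    ⟨hper, hcont, hreg, fun z hz => hpde z hz.1 hz.2, hlim⟩ hinit
end
end

section
/- Let d ≥ 1, let k be a positive integer with k ≥ d/2, and let m̄, m ∈ ℕ^d be multi-indices with |m̄| + |m| = k. (a) There exists C depending only on k and d such that for all ℤ^d-periodic smooth functions g₁, g₂ : ℝ^d → ℝ, ‖(∂^m̄ g₁)(∂^m g₂)‖_{L²} ≤ C (‖g₁‖_{L^∞} ‖g₂‖_{H^k} + ‖g₁‖_{H^k} ‖g₂‖_{L^∞}). (b) If moreover m̄ ≠ 0, then for every ε > 0 there exists C_ε, depending only on ε, k and d, such that for all such g₁, g₂: ‖(∂^m̄ g₁)(∂^m g₂)‖_{L²} ≤ ε ‖g₁‖_{L^∞} ‖g₂‖_{H^k} + C_ε ‖g₁‖_{H^k} ‖g₂‖_{L^∞}. -/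
open Real MeasureTheory
open scoped BigOperators ENNReal

noncomputable section

variable {d : ℕ}

/-- Partial derivative in the direction `i`. -/
def pD (i : Fin d) (u : E d → ℝ) (x : E d) : ℝ :=
  deriv (fun s : ℝ => u (x + s • EuclideanSpace.single i (1 : ℝ))) 0

/-- Iterated partial derivative `∂^a` for a multi-index `a : Fin d → ℕ`. -/
def multiD (a : Fin d → ℕ) (u : E d → ℝ) : E d → ℝ :=
  ((List.ofFn fun i : Fin d => (pD i)^[a i]).foldr (· ∘ ·) id) u

/-- The fundamental domain `[0,1)^d` of the torus. -/
def Box (d : ℕ) : Set (E d) := {x | ∀ i, 0 ≤ x i ∧ x i < 1}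

/-- `ℤ^d`-periodicity. -/
def Periodic (u : E d → ℝ) : Prop :=
  ∀ (x : E d) (i : Fin d), u (x + EuclideanSpace.single i (1 : ℝ)) = u x

/-- The `L²` norm over the fundamental domain. -/
def L2Norm (u : E d → ℝ) : ℝ := Real.sqrt (∫ x in Box d, (u x) ^ 2)

/-- The `H^k` norm over the fundamental domain:
`‖u‖²_{H^k} = Σ_{|β| ≤ k} ‖∂^β u‖²_{L²}`. -/
def HkNorm (k : ℕ) (u : E d → ℝ) : ℝ :=
  Real.sqrt (∑ β : Fin d → Fin (k + 1),
    if (∑ i, (β i : ℕ)) ≤ k then ∫ x in Box d, (multiD (fun i => (β i : ℕ)) u x) ^ 2 else 0)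

/-- The sup norm. -/
def supN (u : E d → ℝ) : ℝ := ⨆ x : E d, |u x|

/-!
Fix `r = 2k` and let `N j` be the largest `L^{r/j}` norm of a derivative of order `j`, so that `N 0`
is the `L^∞` norm and `N k` is controlled by the `H^k` norm. Integrating by parts in
`∫ |∂v|^p = ∫ (|∂v|^{p-2} ∂v) ∂v` with `p = r / (j + 1)` and applying Hölder's inequality gives
`(N (j + 1))² ≤ r * N j * N (j + 2)`: up to constants the sequence `N` is log-convex, and this
yields the Gagliardo–Nirenberg inequality `(N j)^k ≲ (N 0)^(k - j) * (N k)^j`. Since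
`|m̄| / r + |m| / r = 1 / 2`, Hölder's inequality bounds `‖(∂^m̄ g₁)(∂^m g₂)‖_{L²}` by a constant
times the geometric mean of `‖g₁‖_∞ ‖g₂‖_{H^k}` and `‖g₁‖_{H^k} ‖g₂‖_∞` with weights `|m| / k` and
`|m̄| / k`. When `m̄ ≠ 0` the second weight is positive, so Young's inequality can put any `ε` on
the first product.
-/

section CompIterate

variable {ι α : Type*} {T : ι → α → α}

/-- The composite `T i₁^[a i₁] ∘ ⋯ ∘ T iₙ^[a iₙ]` along a list `[i₁, …, iₙ]` of indices. The
derivative `multiD` is the case of the partial derivatives listed by `List.finRange d`. -/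
def compIterate (T : ι → α → α) (a : ι → ℕ) (L : List ι) : α → α :=
  (L.map fun i => (T i)^[a i]).foldr (· ∘ ·) id

theorem compIterate_cons (a : ι → ℕ) (i : ι) (L : List ι) (u : α) :
    compIterate T a (i :: L) u = (T i)^[a i] (compIterate T a L u) := rfl

theorem compIterate_zero (L : List ι) (u : α) : compIterate T 0 L u = u := by
  induction L with
  | nil => rfl
  | cons i L ih => rw [compIterate_cons, ih, Pi.zero_apply, Function.iterate_zero_apply]

theorem compIterate_induction {P : α → Prop} (hT : ∀ i v, P v → P (T i v)) {u : α} (hu : P u)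
    (a : ι → ℕ) (L : List ι) : P (compIterate T a L u) := by
  induction L with
  | nil => exact hu
  | cons i L ih => exact Function.Iterate.rec P ih (hT i) (a i)

theorem compIterate_add_single [DecidableEq ι] {P : α → Prop} (hT : ∀ i v, P v → P (T i v))
    (hcomm : ∀ i j v, P v → T i (T j v) = T j (T i v)) {u : α} (hu : P u) (a : ι → ℕ)
    {L : List ι} (hL : L.Nodup) {i : ι} (hi : i ∈ L) :
    compIterate T (a + Pi.single i 1) L u = T i (compIterate T a L u) := by
  have iterate_comm (j : ι) (n : ℕ) : ∀ v, P v → (T j)^[n] (T i v) = T i ((T j)^[n] v) := by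
    induction n with
    | zero => exact fun v _ => rfl
    | succ n ih =>
      intro v hv
      rw [Function.iterate_succ_apply, Function.iterate_succ_apply, hcomm j i v hv,
        ih _ (hT j v hv)]
  induction L with
  | nil => simp at hi
  | cons j L ih =>
    obtain ⟨hj, hL⟩ := List.nodup_cons.1 hL
    rw [compIterate_cons, compIterate_cons]
    rcases eq_or_ne i j with rfl | hij
    · have htail : compIterate T (a + Pi.single i 1) L = compIterate T a L := by
        unfold compIterate
        congr 1
        refine List.map_congr_left fun l hl => ?_
        have hli : l ≠ i := fun h => hj (h ▸ hl)
        simp [hli]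
      rw [htail, Pi.add_apply, Pi.single_eq_same, Function.iterate_succ_apply']
    · rw [ih hL (List.mem_of_ne_of_mem hij hi), Pi.add_apply, Pi.single_eq_of_ne hij.symm,
        add_zero, iterate_comm j _ _ (compIterate_induction hT hu a L)]

end CompIterate

theorem pD_eq_fderiv {u : E d → ℝ} (hu : Differentiable ℝ u) (i : Fin d) :
    pD i u = fun x => fderiv ℝ u x (EuclideanSpace.single i 1) :=
  funext fun x => ((hu x).hasFDerivAt.hasLineDerivAt (EuclideanSpace.single i 1)).deriv

theorem contDiff_pD {u : E d → ℝ} {m n : WithTop ℕ∞} (hu : ContDiff ℝ n u) (hmn : m + 1 ≤ n)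
    (i : Fin d) : ContDiff ℝ m (pD i u) := by
  rw [pD_eq_fderiv (hu.differentiable (by rintro rfl; simp at hmn)) i]
  exact (hu.fderiv_right hmn).clm_apply contDiff_const

theorem contDiff_top_pD {u : E d → ℝ} (hu : ContDiff ℝ (⊤ : ℕ∞) u) (i : Fin d) :
    ContDiff ℝ (⊤ : ℕ∞) (pD i u) :=
  contDiff_pD hu (by simp) i

theorem pD_comm {u : E d → ℝ} (hu : ContDiff ℝ 2 u) (i j : Fin d) :
    pD i (pD j u) = pD j (pD i u) := by
  have hsymm (x : E d) : IsSymmSndFDerivAt ℝ u x := hu.contDiffAt.isSymmSndFDerivAt (by simp)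
  have hdiff : Differentiable ℝ (fderiv ℝ u) :=
    (hu.fderiv_right (m := 1) (by norm_num)).differentiable one_ne_zero
  have hpD (l : Fin d) : Differentiable ℝ (pD l u) :=
    (contDiff_pD (m := 1) hu (by norm_num) l).differentiable one_ne_zero
  funext x
  rw [pD_eq_fderiv (hpD j), pD_eq_fderiv (hpD i), pD_eq_fderiv (hu.differentiable two_ne_zero),
    pD_eq_fderiv (hu.differentiable two_ne_zero)]
  dsimp only
  rw [fderiv_clm_apply (hdiff x) (by fun_prop), fderiv_clm_apply (hdiff x) (by fun_prop)]
  simpa using hsymm x _ _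

theorem pD_mul {u v : E d → ℝ} (hu : Differentiable ℝ u) (hv : Differentiable ℝ v) (i : Fin d) :
    pD i (u * v) = u * pD i v + pD i u * v := by
  funext x
  rw [pD_eq_fderiv (hu.mul hv), pD_eq_fderiv hu, pD_eq_fderiv hv]
  simp [fderiv_mul (hu x) (hv x), mul_comm]

theorem pD_comp {φ : ℝ → ℝ} {u : E d → ℝ} (hφ : Differentiable ℝ φ) (hu : Differentiable ℝ u)
    (i : Fin d) : pD i (φ ∘ u) = (deriv φ ∘ u) * pD i u := by
  funext x
  rw [pD_eq_fderiv (hφ.comp hu), pD_eq_fderiv hu]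
  simp [fderiv_comp x (hφ _) (hu x), mul_comm]

theorem multiD_eq_compIterate (a : Fin d → ℕ) (u : E d → ℝ) :
    multiD a u = compIterate pD a (List.finRange d) u := by
  rw [multiD, List.ofFn_eq_map, compIterate]

theorem multiD_zero (u : E d → ℝ) : multiD 0 u = u := by
  rw [multiD_eq_compIterate]
  exact compIterate_zero _ u

theorem multiD_add_single {u : E d → ℝ} (hu : ContDiff ℝ (⊤ : ℕ∞) u) (a : Fin d → ℕ)
    (i : Fin d) : multiD (a + Pi.single i 1) u = pD i (multiD a u) := by
  rw [multiD_eq_compIterate, multiD_eq_compIterate]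
  exact compIterate_add_single (fun j _ hv => contDiff_top_pD hv j)
    (fun j l _ hv => pD_comm (hv.of_le (WithTop.coe_le_coe.2 le_top)) j l) hu a
    (List.nodup_finRange d) (List.mem_finRange i)

theorem contDiff_multiD {u : E d → ℝ} (hu : ContDiff ℝ (⊤ : ℕ∞) u) (a : Fin d → ℕ) :
    ContDiff ℝ (⊤ : ℕ∞) (multiD a u) := by
  rw [multiD_eq_compIterate]
  exact compIterate_induction (P := ContDiff ℝ (⊤ : ℕ∞)) (fun i _ hv => contDiff_top_pD hv i) hu a _

theorem Periodic.pD {u : E d → ℝ} (hu : Periodic u) (i : Fin d) : Periodic (pD i u) := by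
  intro x j
  simp only [_root_.pD, add_right_comm _ (EuclideanSpace.single j (1 : ℝ)), hu _ j]

theorem Periodic.multiD {u : E d → ℝ} (hu : Periodic u) (a : Fin d → ℕ) :
    Periodic (multiD a u) := by
  rw [multiD_eq_compIterate]
  exact compIterate_induction (fun i _ hv => hv.pD i) hu a _

theorem Periodic.mul {u v : E d → ℝ} (hu : Periodic u) (hv : Periodic v) : Periodic (u * v) :=
  fun x i => by simp only [Pi.mul_apply, hu x i, hv x i]

theorem Periodic.comp {u : E d → ℝ} (hu : Periodic u) (φ : ℝ → ℝ) : Periodic (φ ∘ u) :=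
  fun x i => congrArg φ (hu x i)

theorem Periodic.exists_mem_Box {u : E d → ℝ} (hu : Periodic u) (x : E d) :
    ∃ y ∈ Box d, u y = u x := by
  let shift : E d := ∑ i, (-⌊x i⌋) • EuclideanSpace.single i (1 : ℝ)
  have hshift : Function.Periodic u shift :=
    Finset.sum_induction _ (Function.Periodic u) (fun _ _ => Function.Periodic.add_period)
      (fun y => by rw [add_zero]) fun i _ => Function.Periodic.zsmul (hu · i) _
  have hfract (i : Fin d) : (x + shift) i = Int.fract (x i) := by
    simp [shift, Finset.sum_apply, Pi.single_apply, Int.fract, sub_eq_add_neg]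
  refine ⟨x + shift, fun i => ?_, hshift x⟩
  rw [hfract]
  exact ⟨Int.fract_nonneg _, Int.fract_lt_one _⟩

theorem isBounded_Box : Bornology.IsBounded (Box d) := by
  refine (((EuclideanSpace.equiv (Fin d) ℝ).symm.lipschitz.isBounded_image
    (Metric.isBounded_Icc (0 : Fin d → ℝ) 1))).subset fun x hx => ?_
  exact ⟨x, ⟨fun i => (hx i).1, fun i => (hx i).2.le⟩, rfl⟩

/-- Lebesgue measure on the fundamental domain, which plays the role of the Haar measure of the
torus for periodic functions. -/
abbrev torusVolume (d : ℕ) : Measure (E d) := volume.restrict (Box d)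

instance : IsFiniteMeasure (torusVolume d) :=
  ⟨by simpa using isBounded_Box.measure_lt_top⟩

theorem memLp_Box {u : E d → ℝ} (hu : Continuous u) (p : ℝ≥0∞) :
    MemLp u p (torusVolume d) := by
  have hcompact : IsCompact (closure (Box d)) := isBounded_Box.isCompact_closure
  obtain ⟨C, hC⟩ := hcompact.exists_bound_of_continuousOn hu.continuousOn
  exact MemLp.of_bound hu.aestronglyMeasurable C <|
    ae_restrict_of_ae_restrict_of_subset subset_closure <|
      ae_restrict_of_forall_mem hcompact.measurableSet hC

theorem integrableOn_Box {u : E d → ℝ} (hu : Continuous u) : IntegrableOn u (Box d) :=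
  memLp_one_iff_integrable.1 (memLp_Box hu 1)

theorem setIntegral_Box {F : Type*} [NormedAddCommGroup F] [NormedSpace ℝ F] (f : E d → F) :
    ∫ x in Box d, f x = ∫ y in Set.Icc (0 : Fin d → ℝ) 1, f (WithLp.toLp 2 y) := by
  have hpre : MeasurableEquiv.toLp 2 (Fin d → ℝ) ⁻¹' Box d =
      Set.univ.pi fun i => Set.Ico ((0 : Fin d → ℝ) i) ((1 : Fin d → ℝ) i) := by
    ext y
    simp [Box]
  rw [← (EuclideanSpace.volume_preserving_symm_measurableEquiv_toLp (Fin d)).symm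
    |>.setIntegral_preimage_emb (MeasurableEquiv.measurableEmbedding _),
    MeasurableEquiv.symm_symm, hpre]
  exact setIntegral_congr_set (Measure.univ_pi_Ico_ae_eq_Icc (μ := fun _ => volume))

theorem setIntegral_Icc_fderiv_single_eq_zero {F : Type*} [NormedAddCommGroup F] [NormedSpace ℝ F]
    {n : ℕ} {G : (Fin (n + 1) → ℝ) → F} (hG : ContDiff ℝ 1 G) {i : Fin (n + 1)}
    (hper : Function.Periodic G (Pi.single i 1)) :
    ∫ y in Set.Icc 0 1, fderiv ℝ G y (Pi.single i 1) = 0 := by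
  have hfaces (x : Fin n → ℝ) : G (i.insertNth 1 x) = G (i.insertNth 0 x) := by
    rw [← hper (i.insertNth 0 x)]
    congr 1
    ext l
    refine Fin.succAboveCases i ?_ (fun l => ?_) l <;> simp
  have hsum (y : Fin (n + 1) → ℝ) :
      ∑ j, (if j = i then fderiv ℝ G y else 0) (Pi.single j 1) =
        fderiv ℝ G y (Pi.single i 1) := by
    rw [Finset.sum_eq_single i (fun j _ hj => by simp [hj]) (by simp), if_pos rfl]
  have hdiv := integral_divergence_of_hasFDerivAt_off_countable' (0 : Fin (n + 1) → ℝ) 1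
    zero_le_one (fun j y => if j = i then G y else 0)
    (fun j y => if j = i then fderiv ℝ G y else 0) ∅ Set.countable_empty
    (fun j => by split_ifs; exacts [hG.continuous.continuousOn, continuousOn_const])
    (fun y _ j => by
      split_ifs
      exacts [(hG.differentiable one_ne_zero y).hasFDerivAt, hasFDerivAt_const _ _])
    (by
      simp only [hsum]
      exact ((hG.continuous_fderiv one_ne_zero).clm_apply continuous_const).continuousOn
        |>.integrableOn_compact isCompact_Icc)
  simp only [hsum] at hdiv
  rw [hdiv]
  refine Finset.sum_eq_zero fun j _ => ?_
  by_cases hj : j = i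
  · subst hj
    simp [hfaces]
  · simp [hj]

theorem setIntegral_Box_pD_eq_zero {u : E d → ℝ} (hu : ContDiff ℝ 1 u) (hper : Periodic u)
    (i : Fin d) : ∫ x in Box d, pD i u x = 0 := by
  obtain _ | n := d
  · exact i.elim0
  let e := (EuclideanSpace.equiv (Fin (n + 1)) ℝ).symm
  have hpD (y : Fin (n + 1) → ℝ) :
      pD i u (WithLp.toLp 2 y) = fderiv ℝ (u ∘ e) y (Pi.single i 1) := by
    rw [pD_eq_fderiv (hu.differentiable one_ne_zero), e.comp_right_fderiv]
    rfl
  simp only [setIntegral_Box, hpD]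
  exact setIntegral_Icc_fderiv_single_eq_zero (hu.comp e.contDiff) fun y => hper (e y) i

theorem setIntegral_Box_mul_pD_eq_neg {u v : E d → ℝ} (hu : ContDiff ℝ 1 u)
    (hv : ContDiff ℝ 1 v) (hpu : Periodic u) (hpv : Periodic v) (i : Fin d) :
    ∫ x in Box d, u x * pD i v x = -∫ x in Box d, pD i u x * v x := by
  have hcu : Continuous (pD i u) := (contDiff_pD (m := 0) hu (by simp) i).continuous
  have hcv : Continuous (pD i v) := (contDiff_pD (m := 0) hv (by simp) i).continuous
  have hprod : ∫ x in Box d, (u * pD i v + pD i u * v) x = 0 := by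
    rw [← pD_mul (hu.differentiable one_ne_zero) (hv.differentiable one_ne_zero)]
    exact setIntegral_Box_pD_eq_zero (hu.mul hv) (hpu.mul hpv) i
  rw [integral_add' (integrableOn_Box (hu.continuous.mul hcv))
    (integrableOn_Box (hcu.mul hv.continuous))] at hprod
  exact eq_neg_of_add_eq_zero_left hprod

theorem hasDerivAt_abs_rpow_mul_self {q : ℝ} (hq : 0 < q) (t : ℝ) :
    HasDerivAt (fun t : ℝ => |t| ^ q * t) ((q + 1) * |t| ^ q) t := by
  have hcont : Continuous fun t : ℝ => |t| ^ q := continuous_abs.rpow_const fun _ => Or.inr hq.le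
  refine hasDerivAt_of_hasDerivAt_of_ne' (x := 0) (fun s hs => ?_)
    (hcont.mul continuous_id).continuousAt (hcont.const_mul _).continuousAt t
  have habs : |s| ≠ 0 := abs_ne_zero.2 hs
  refine (((hasDerivAt_abs hs).rpow_const (p := q) (Or.inl habs)).mul (hasDerivAt_id s)).congr_deriv
    ?_
  have hrpow : |s| ^ (q - 1) * |s| = |s| ^ q := by
    rw [Real.rpow_sub_one habs, div_mul_cancel₀ _ habs]
  have hsign : (SignType.sign s : ℝ) * s = |s| := sign_mul_self s
  simp only [id, mul_one]
  linear_combination (q * |s| ^ (q - 1)) * hsign + q * hrpow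

theorem contDiff_abs_rpow_mul_self {q : ℝ} (hq : 0 < q) :
    ContDiff ℝ 1 fun t : ℝ => |t| ^ q * t := by
  refine contDiff_one_iff_deriv.2
    ⟨fun t => (hasDerivAt_abs_rpow_mul_self hq t).differentiableAt, ?_⟩
  rw [funext fun t => (hasDerivAt_abs_rpow_mul_self hq t).deriv]
  exact continuous_const.mul (continuous_abs.rpow_const fun _ => Or.inr hq.le)

theorem setIntegral_Box_abs_pD_rpow_le {v : E d → ℝ} (hv : ContDiff ℝ 2 v) (hper : Periodic v)
    (i : Fin d) {p : ℝ} (hp : 2 < p) :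
    ∫ x in Box d, |pD i v x| ^ p ≤
      (p - 1) * ∫ x in Box d, |pD i v x| ^ (p - 2) * |v x * pD i (pD i v) x| := by
  set w := pD i v
  set z := pD i w
  let φ (t : ℝ) : ℝ := |t| ^ (p - 2) * t
  have hq : 0 < p - 2 := sub_pos.2 hp
  have hφ : ContDiff ℝ 1 φ := contDiff_abs_rpow_mul_self hq
  have hw : ContDiff ℝ 1 w := contDiff_pD hv (by norm_num) i
  have hwq : Continuous fun x => |w x| ^ (p - 2) :=
    hw.continuous.abs.rpow_const fun _ => Or.inr hq.le
  have hvz : Continuous fun x => v x * z x :=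
    hv.continuous.mul (contDiff_pD (m := 0) hw (by simp) i).continuous
  have hderiv (x : E d) : pD i (φ ∘ w) x * v x = (p - 1) * (|w x| ^ (p - 2) * (v x * z x)) := by
    rw [pD_comp (hφ.differentiable one_ne_zero) (hw.differentiable one_ne_zero), Pi.mul_apply,
      Function.comp_apply, (hasDerivAt_abs_rpow_mul_self hq _).deriv]
    ring
  calc ∫ x in Box d, |w x| ^ p = ∫ x in Box d, (φ ∘ w) x * pD i v x := by
        congr 1 with x
        have : |w x| ^ p = |w x| ^ (p - 2) * |w x| ^ (2 : ℝ) := by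
          rw [← Real.rpow_add_of_nonneg (abs_nonneg _) hq.le zero_le_two, sub_add_cancel]
        rw [this, Real.rpow_two, sq_abs, Function.comp_apply]
        ring
    _ = (p - 1) * -∫ x in Box d, |w x| ^ (p - 2) * (v x * z x) := by
        rw [setIntegral_Box_mul_pD_eq_neg (hφ.comp hw) (hv.of_le one_le_two)
          ((hper.pD i).comp φ) hper i]
        simp only [hderiv, integral_const_mul, mul_neg]
    _ ≤ (p - 1) * ∫ x in Box d, |w x| ^ (p - 2) * |v x * z x| := by
        rw [← integral_neg]
        refine mul_le_mul_of_nonneg_left ?_ (by linarith)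
        refine integral_mono (integrableOn_Box (hwq.mul hvz)).neg
          (integrableOn_Box (hwq.mul hvz.abs)) fun x => ?_
        rw [← mul_neg]
        exact mul_le_mul_of_nonneg_left (neg_le_abs _) (by positivity)

section LpNorm

variable {α F : Type*} {mα : MeasurableSpace α} {μ : Measure α} [NormedAddCommGroup F]

theorem lpNorm_mul_le {R : Type*} [NormedRing R] {f g : α → R} {p q r : ℝ≥0∞}
    [p.HolderTriple q r] (hf : MemLp f p μ) (hg : MemLp g q μ) :
    lpNorm (fun x => f x * g x) r μ ≤ lpNorm f p μ * lpNorm g q μ := by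
  have holder : eLpNorm (f • g) r μ ≤ eLpNorm f p μ * eLpNorm g q μ :=
    eLpNorm_smul_le_mul_eLpNorm hg.1 hf.1
  change lpNorm (f • g) r μ ≤ _
  rw [← toReal_eLpNorm (hf.1.smul hg.1), ← toReal_eLpNorm hf.1,
    ← toReal_eLpNorm hg.1, ← ENNReal.toReal_mul]
  exact ENNReal.toReal_mono (ENNReal.mul_lt_top hf.2 hg.2).ne holder

theorem lpNorm_norm_rpow {f : α → F} (hf : AEStronglyMeasurable f μ) {q : ℝ} (hq : 0 < q)
    (p : ℝ≥0∞) :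
    lpNorm (fun x => ‖f x‖ ^ q) p μ = lpNorm f (p * ENNReal.ofReal q) μ ^ q := by
  have hfq : AEStronglyMeasurable (fun x => ‖f x‖ ^ q) μ :=
    (Real.continuous_rpow_const hq.le).comp_aestronglyMeasurable hf.norm
  rw [← toReal_eLpNorm hfq, eLpNorm_norm_rpow f hq, ← ENNReal.toReal_rpow, toReal_eLpNorm hf]

theorem integral_norm_rpow_eq_lpNorm_rpow {f : α → F} (hf : AEStronglyMeasurable f μ)
    {p : ℝ} (hp : 0 < p) :
    ∫ x, ‖f x‖ ^ p ∂μ = lpNorm f (ENNReal.ofReal p) μ ^ p := by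
  rw [← one_mul (ENNReal.ofReal p), ← lpNorm_norm_rpow hf hp, lpNorm_one_eq_integral_norm
    ((Real.continuous_rpow_const hp.le).comp_aestronglyMeasurable hf.norm)]
  simp [abs_of_nonneg, Real.rpow_nonneg]

theorem integral_norm_rpow_mul_norm_le {G : Type*} [NormedAddCommGroup G] {f : α → F} {g : α → G}
    {p r : ℝ≥0∞} {q : ℝ} (hq : 0 < q) [(p / ENNReal.ofReal q).HolderTriple r 1]
    (hf : MemLp f p μ) (hg : MemLp g r μ) :
    ∫ x, ‖f x‖ ^ q * ‖g x‖ ∂μ ≤ lpNorm f p μ ^ q * lpNorm g r μ := by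
  have hfq : MemLp (fun x => ‖f x‖ ^ q) (p / ENNReal.ofReal q) μ := by
    simpa only [ENNReal.toReal_ofReal hq.le] using hf.norm_rpow_div (ENNReal.ofReal q)
  calc ∫ x, ‖f x‖ ^ q * ‖g x‖ ∂μ = lpNorm (fun x => ‖f x‖ ^ q * ‖g x‖) 1 μ := by
        rw [lpNorm_one_eq_integral_norm (f := fun x => ‖f x‖ ^ q * ‖g x‖) (hfq.1.mul hg.1.norm)]
        simp only [norm_mul, norm_norm, Real.norm_of_nonneg (Real.rpow_nonneg (norm_nonneg _) q)]
    _ ≤ lpNorm (fun x => ‖f x‖ ^ q) (p / ENNReal.ofReal q) μ * lpNorm (fun x => ‖g x‖) r μ :=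
        lpNorm_mul_le hfq hg.norm
    _ = lpNorm f p μ ^ q * lpNorm g r μ := by
        rw [lpNorm_norm_rpow hf.1 hq, lpNorm_norm hg.1,
          ENNReal.div_mul_cancel (by simpa using hq) ENNReal.ofReal_ne_top]

end LpNorm

theorem holderTriple_div {r a b c : ℝ≥0∞} (h₀ : r ≠ 0) (hr : r ≠ ⊤) (h : a + b = c) :
    (r / a).HolderTriple (r / b) (r / c) := by
  constructor
  simp only [ENNReal.inv_div (Or.inr hr) (Or.inr h₀), ENNReal.div_add_div_same, h]

theorem lpNorm_pD_sq_le {v : E d → ℝ} (hv : ContDiff ℝ 2 v) (hper : Periodic v) (i : Fin d)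
    {p : ℝ} (hp : 2 < p) {s t : ℝ≥0∞} [s.HolderTriple t (ENNReal.ofReal p / 2)] :
    lpNorm (pD i v) (ENNReal.ofReal p) (torusVolume d) ^ 2 ≤
      (p - 1) * (lpNorm v s (torusVolume d) * lpNorm (pD i (pD i v)) t (torusVolume d)) := by
  have hp₀ : 0 < p := two_pos.trans hp
  have hq : 0 < p - 2 := sub_pos.2 hp
  have hp₁ : 0 ≤ p - 1 := by linarith
  set w := pD i v
  have hw : ContDiff ℝ 1 w := contDiff_pD hv (by norm_num) i
  have hz : Continuous (pD i w) := (contDiff_pD (m := 0) hw (by simp) i).continuous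
  have holder : (ENNReal.ofReal p / ENNReal.ofReal (p - 2)).HolderTriple
      (ENNReal.ofReal p / 2) (ENNReal.ofReal p / ENNReal.ofReal p) :=
    holderTriple_div (by simpa) ENNReal.ofReal_ne_top <| by
      rw [← ENNReal.ofReal_ofNat 2, ← ENNReal.ofReal_add hq.le zero_le_two, sub_add_cancel]
  rw [ENNReal.div_self (by simpa) ENNReal.ofReal_ne_top] at holder
  generalize hN : lpNorm w (ENNReal.ofReal p) (torusVolume d) = N
  have hN₀ : 0 ≤ N := hN ▸ lpNorm_nonneg
  have hpow : N ^ (p - 2) * N ^ 2 ≤ N ^ (p - 2) *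
      ((p - 1) * (lpNorm v s (torusVolume d) * lpNorm (pD i w) t (torusVolume d))) := by
    calc N ^ (p - 2) * N ^ 2 = ∫ x in Box d, |w x| ^ p := by
          rw [← Real.rpow_two, ← Real.rpow_add_of_nonneg hN₀ hq.le zero_le_two, sub_add_cancel,
            ← hN]
          exact (integral_norm_rpow_eq_lpNorm_rpow hw.continuous.aestronglyMeasurable hp₀).symm
      _ ≤ (p - 1) * ∫ x in Box d, |w x| ^ (p - 2) * |v x * pD i w x| :=
          setIntegral_Box_abs_pD_rpow_le hv hper i hp
      _ ≤ (p - 1) * (N ^ (p - 2) *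
            lpNorm (fun x => v x * pD i w x) (ENNReal.ofReal p / 2) (torusVolume d)) := by
          rw [← hN]
          exact mul_le_mul_of_nonneg_left (integral_norm_rpow_mul_norm_le hq
            (memLp_Box hw.continuous _) (memLp_Box (hv.continuous.mul hz) _)) hp₁
      _ ≤ _ := by
          rw [mul_left_comm]
          gcongr
          exact lpNorm_mul_le (memLp_Box hv.continuous _) (memLp_Box hz _)
  rcases hN₀.eq_or_lt with rfl | hpos
  · rw [zero_pow two_ne_zero]
    exact mul_nonneg hp₁ (mul_nonneg lpNorm_nonneg lpNorm_nonneg)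
  · exact le_of_mul_le_mul_left hpow (Real.rpow_pos_of_pos hpos _)

section LogConvex

variable {x : ℕ → ℝ}

theorem pow_succ_le_mul_pow_of_sq_le (hx : ∀ n, 0 ≤ x n) {n : ℕ}
    (hconv : ∀ i < n, x (i + 1) ^ 2 ≤ x i * x (i + 2)) :
    x n ^ (n + 1) ≤ x 0 * x (n + 1) ^ n := by
  induction n with
  | zero => simp
  | succ n ih =>
    rcases (hx (n + 1)).eq_or_lt with hzero | hpos
    · rw [← hzero, zero_pow (by omega)]
      exact mul_nonneg (hx 0) (pow_nonneg (hx _) _)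
    · refine le_of_mul_le_mul_left ?_ (pow_pos hpos n)
      calc x (n + 1) ^ n * x (n + 1) ^ (n + 1 + 1) = (x (n + 1) ^ 2) ^ (n + 1) := by ring
        _ ≤ (x n * x (n + 1 + 1)) ^ (n + 1) := by gcongr; exact hconv n n.lt_succ_self
        _ = x n ^ (n + 1) * x (n + 1 + 1) ^ (n + 1) := mul_pow _ _ _
        _ ≤ x 0 * x (n + 1) ^ n * x (n + 1 + 1) ^ (n + 1) :=
          mul_le_mul_of_nonneg_right (ih fun i hi => hconv i (by omega)) (pow_nonneg (hx _) _)
        _ = x (n + 1) ^ n * (x 0 * x (n + 1 + 1) ^ (n + 1)) := by ring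

theorem pow_add_le_pow_mul_pow_of_sq_le (hx : ∀ n, 0 ≤ x n) (j l : ℕ)
    (hconv : ∀ i, i + 2 ≤ j + l → x (i + 1) ^ 2 ≤ x i * x (i + 2)) :
    x j ^ (j + l) ≤ x 0 ^ l * x (j + l) ^ j := by
  induction l with
  | zero => simp
  | succ l ih =>
    rcases Nat.eq_zero_or_pos (j + l) with hzero | hpos
    · obtain ⟨rfl, rfl⟩ := Nat.add_eq_zero_iff.1 hzero
      simp
    · rw [← add_assoc]
      refine le_of_pow_le_pow_left₀ hpos.ne'
        (mul_nonneg (pow_nonneg (hx _) _) (pow_nonneg (hx _) _)) ?_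
      calc (x j ^ (j + l + 1)) ^ (j + l) = (x j ^ (j + l)) ^ (j + l + 1) := pow_right_comm _ _ _
        _ ≤ (x 0 ^ l * x (j + l) ^ j) ^ (j + l + 1) :=
            pow_le_pow_left₀ (pow_nonneg (hx _) _) (ih fun i hi => hconv i (by omega)) _
        _ = x 0 ^ (l * (j + l + 1)) * (x (j + l) ^ (j + l + 1)) ^ j := by ring
        _ ≤ x 0 ^ (l * (j + l + 1)) * (x 0 * x (j + l + 1) ^ (j + l)) ^ j := by
            have := pow_nonneg (hx 0) (l * (j + l + 1))
            have := pow_nonneg (hx (j + l)) (j + l + 1)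
            gcongr
            exact pow_succ_le_mul_pow_of_sq_le hx fun i hi => hconv i (by omega)
        _ = (x 0 ^ (l + 1) * x (j + l + 1) ^ j) ^ (j + l) := by ring

theorem pow_add_le_pow_mul_pow_of_sq_le_mul (hx : ∀ n, 0 ≤ x n) {c : ℝ} (hc : 1 ≤ c) (j l : ℕ)
    (hconv : ∀ i, i + 2 ≤ j + l → x (i + 1) ^ 2 ≤ c ^ 2 * (x i * x (i + 2))) :
    x j ^ (j + l) ≤ c ^ (j + l) ^ 3 * (x 0 ^ l * x (j + l) ^ j) := by
  have hc₀ : 0 ≤ c := zero_le_one.trans hc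
  -- Since `i ^ 2 + (i + 2) ^ 2 = 2 * (i + 1) ^ 2 + 2`, the weight `c ^ n ^ 2` absorbs `c ^ 2`.
  have hweighted := pow_add_le_pow_mul_pow_of_sq_le (x := fun n => c ^ n ^ 2 * x n)
    (fun n => mul_nonneg (pow_nonneg hc₀ _) (hx n)) j l fun i hi => by
      calc (c ^ (i + 1) ^ 2 * x (i + 1)) ^ 2 = c ^ (2 * (i + 1) ^ 2) * x (i + 1) ^ 2 := by ring
        _ ≤ c ^ (2 * (i + 1) ^ 2) * (c ^ 2 * (x i * x (i + 2))) := by gcongr; exact hconv i hi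
        _ = c ^ i ^ 2 * x i * (c ^ (i + 2) ^ 2 * x (i + 2)) := by ring
  have hrhs : 0 ≤ x 0 ^ l * x (j + l) ^ j :=
    mul_nonneg (pow_nonneg (hx _) _) (pow_nonneg (hx _) _)
  calc x j ^ (j + l) ≤ (c ^ j ^ 2 * x j) ^ (j + l) :=
        pow_le_pow_left₀ (hx j) (le_mul_of_one_le_left (hx j) (one_le_pow₀ hc)) _
    _ ≤ (c ^ 0 ^ 2 * x 0) ^ l * (c ^ (j + l) ^ 2 * x (j + l)) ^ j := hweighted
    _ = c ^ ((j + l) ^ 2 * j) * (x 0 ^ l * x (j + l) ^ j) := by ring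
    _ ≤ c ^ (j + l) ^ 3 * (x 0 ^ l * x (j + l) ^ j) := by
        refine mul_le_mul_of_nonneg_right (pow_le_pow_right₀ hc ?_) hrhs
        exact (Nat.mul_le_mul_left _ (Nat.le_add_right j l)).trans_eq (pow_succ _ 2).symm

end LogConvex

instance (j : ℕ) : Finite {a : Fin d → ℕ // ∑ i, a i = j} :=
  ((Finset.univ.piAntidiag j).finite_toSet.subset fun a (ha : ∑ i, a i = j) => by
    simpa using ha).to_subtype

/-- The largest `L^{r/j}` norm of a derivative of order `j`. At `j = 0` the exponent is `r / 0 = ⊤`,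
so this is the `L^∞` norm of `u`. These are the norms that Hölder's inequality and integration by
parts relate for a fixed `r`. -/
def derivLpNorm (r : ℝ) (j : ℕ) (u : E d → ℝ) : ℝ :=
  ⨆ a : {a : Fin d → ℕ // ∑ i, a i = j},
    lpNorm (multiD a.1 u) (ENNReal.ofReal r / j) (torusVolume d)

theorem lpNorm_multiD_le_derivLpNorm (r : ℝ) {j : ℕ} {a : Fin d → ℕ} (ha : ∑ i, a i = j)
    (u : E d → ℝ) :
    lpNorm (multiD a u) (ENNReal.ofReal r / j) (torusVolume d) ≤ derivLpNorm r j u :=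
  le_ciSup (f := fun a : {a : Fin d → ℕ // ∑ i, a i = j} =>
    lpNorm (multiD a.1 u) (ENNReal.ofReal r / j) (torusVolume d)) (Set.finite_range _).bddAbove
    ⟨a, ha⟩

theorem derivLpNorm_le {r C : ℝ} {j : ℕ} {u : E d → ℝ} (hC : 0 ≤ C)
    (h : ∀ a : Fin d → ℕ, ∑ i, a i = j →
      lpNorm (multiD a u) (ENNReal.ofReal r / j) (torusVolume d) ≤ C) :
    derivLpNorm r j u ≤ C :=
  Real.iSup_le (fun a => h a.1 a.2) hC

theorem derivLpNorm_nonneg (r : ℝ) (j : ℕ) (u : E d → ℝ) : 0 ≤ derivLpNorm r j u :=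
  Real.iSup_nonneg fun _ => lpNorm_nonneg

theorem exists_eq_add_single_of_sum_eq_succ {ι : Type*} [Fintype ι] [DecidableEq ι] {a : ι → ℕ}
    {n : ℕ} (ha : ∑ i, a i = n + 1) :
    ∃ (b : ι → ℕ) (i : ι), ∑ i, b i = n ∧ a = b + Pi.single i 1 := by
  obtain ⟨i, -, hi⟩ : ∃ i ∈ Finset.univ, a i ≠ 0 :=
    Finset.exists_ne_zero_of_sum_ne_zero (ha ▸ n.succ_ne_zero)
  have hle : Pi.single i 1 ≤ a := fun l => by
    rcases eq_or_ne l i with rfl | hl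
    · simpa [Nat.one_le_iff_ne_zero] using hi
    · simp [hl]
  have hsub : a = (a - Pi.single i 1) + Pi.single i 1 := (tsub_add_cancel_of_le hle).symm
  refine ⟨_, i, ?_, hsub⟩
  rw [hsub] at ha
  simpa [Finset.sum_add_distrib] using ha

theorem derivLpNorm_succ_sq_le {u : E d → ℝ} (hu : ContDiff ℝ (⊤ : ℕ∞) u) (hper : Periodic u)
    {r : ℝ} {n : ℕ} (hr : 2 * (n + 1) < r) :
    derivLpNorm r (n + 1) u ^ 2 ≤ r * (derivLpNorm r n u * derivLpNorm r (n + 2) u) := by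
  have hr₀ : 0 < r := lt_trans (by positivity) hr
  have hn : (0 : ℝ) < n + 1 := n.cast_add_one_pos
  have hrhs : 0 ≤ r * (derivLpNorm r n u * derivLpNorm r (n + 2) u) :=
    mul_nonneg hr₀.le (mul_nonneg (derivLpNorm_nonneg _ _ _) (derivLpNorm_nonneg _ _ _))
  have hp : ENNReal.ofReal (r / (n + 1)) = ENNReal.ofReal r / (n + 1 : ℕ) := by
    rw [ENNReal.ofReal_div_of_pos hn, ← Nat.cast_add_one, ENNReal.ofReal_natCast]
  have hhalf : ENNReal.ofReal (r / (n + 1)) / 2 = ENNReal.ofReal r / ((n + 1 : ℕ) * 2) := by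
    rw [hp, div_eq_mul_inv, div_eq_mul_inv, div_eq_mul_inv, mul_assoc,
      ENNReal.mul_inv (by simp) (by simp)]
  have holder : (ENNReal.ofReal r / n).HolderTriple (ENNReal.ofReal r / (n + 2 : ℕ))
      (ENNReal.ofReal (r / (n + 1)) / 2) := by
    rw [hhalf]
    refine holderTriple_div (by simpa) ENNReal.ofReal_ne_top ?_
    push_cast
    ring
  refine (Real.le_sqrt (derivLpNorm_nonneg _ _ _) hrhs).1
    (derivLpNorm_le (Real.sqrt_nonneg _) fun a ha => Real.le_sqrt_of_sq_le ?_)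
  obtain ⟨b, i, hb, rfl⟩ := exists_eq_add_single_of_sum_eq_succ ha
  have hsum : ∑ l, (b + Pi.single i 1 + Pi.single i 1 : Fin d → ℕ) l = n + 2 := by
    simp [Finset.sum_add_distrib, hb]
  have hv : ContDiff ℝ 2 (multiD b u) :=
    (contDiff_multiD hu b).of_le (WithTop.coe_le_coe.2 le_top)
  have hv₂ : multiD (b + Pi.single i 1 + Pi.single i 1) u = pD i (pD i (multiD b u)) := by
    rw [multiD_add_single hu, multiD_add_single hu]
  calc lpNorm (multiD (b + Pi.single i 1) u) (ENNReal.ofReal r / (n + 1 : ℕ)) (torusVolume d) ^ 2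
      ≤ (r / (n + 1) - 1) * (lpNorm (multiD b u) (ENNReal.ofReal r / n) (torusVolume d) *
          lpNorm (multiD (b + Pi.single i 1 + Pi.single i 1) u)
            (ENNReal.ofReal r / (n + 2 : ℕ)) (torusVolume d)) := by
        rw [hv₂, multiD_add_single hu, ← hp]
        exact lpNorm_pD_sq_le hv (hper.multiD b) i ((lt_div_iff₀ hn).2 hr)
    _ ≤ r * (derivLpNorm r n u * derivLpNorm r (n + 2) u) := by
        refine mul_le_mul ?_ (mul_le_mul (lpNorm_multiD_le_derivLpNorm r hb u)
          (lpNorm_multiD_le_derivLpNorm r hsum u) lpNorm_nonneg (derivLpNorm_nonneg _ _ _))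
          (mul_nonneg lpNorm_nonneg lpNorm_nonneg) hr₀.le
        have := div_le_self hr₀.le (le_add_of_nonneg_left n.cast_nonneg : (1 : ℝ) ≤ n + 1)
        linarith

theorem derivLpNorm_pow_le {u : E d → ℝ} (hu : ContDiff ℝ (⊤ : ℕ∞) u) (hper : Periodic u)
    {r : ℝ} (hr : 1 ≤ r) {j l : ℕ} (hjl : 2 * (j + l) ≤ r) :
    derivLpNorm r j u ^ (j + l) ≤
      r ^ (j + l) ^ 3 * (derivLpNorm r 0 u ^ l * derivLpNorm r (j + l) u ^ j) := by
  refine pow_add_le_pow_mul_pow_of_sq_le_mul (fun n => derivLpNorm_nonneg r n u) hr j l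
    fun n hn => (derivLpNorm_succ_sq_le hu hper ?_).trans ?_
  · have : (n + 2 : ℝ) ≤ j + l := mod_cast hn
    linarith
  · exact mul_le_mul_of_nonneg_right (le_self_pow₀ hr two_ne_zero)
      (mul_nonneg (derivLpNorm_nonneg _ _ _) (derivLpNorm_nonneg _ _ _))

theorem L2Norm_eq_lpNorm {u : E d → ℝ} (hu : Continuous u) :
    L2Norm u = lpNorm u 2 (torusVolume d) := by
  have h := integral_norm_rpow_eq_lpNorm_rpow (μ := torusVolume d) hu.aestronglyMeasurable two_pos
  simp only [Real.rpow_two, Real.norm_eq_abs, sq_abs, ENNReal.ofReal_ofNat] at h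
  rw [L2Norm, h, Real.sqrt_sq lpNorm_nonneg]

theorem L2Norm_multiD_le_HkNorm {k : ℕ} {a : Fin d → ℕ} (ha : ∑ i, a i ≤ k) (u : E d → ℝ) :
    L2Norm (multiD a u) ≤ HkNorm k u := by
  have hle (i : Fin d) : a i ≤ k :=
    (Finset.single_le_sum_of_canonicallyOrdered (Finset.mem_univ i)).trans ha
  let β : Fin d → Fin (k + 1) := fun i => ⟨a i, Nat.lt_succ_of_le (hle i)⟩
  refine Real.sqrt_le_sqrt (le_of_eq_of_le (if_pos ha).symm
    (Finset.single_le_sum (f := fun β : Fin d → Fin (k + 1) =>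
      if ∑ i, (β i : ℕ) ≤ k then ∫ x in Box d, multiD (fun i => (β i : ℕ)) u x ^ 2 else 0)
      (fun β _ => ?_) (Finset.mem_univ β)))
  split_ifs
  exacts [integral_nonneg fun x => sq_nonneg _, le_rfl]

theorem Periodic.bddAbove_range_abs {u : E d → ℝ} (hper : Periodic u) (hu : Continuous u) :
    BddAbove (Set.range fun x => |u x|) := by
  obtain ⟨C, hC⟩ :=
    (isBounded_Box (d := d)).isCompact_closure.exists_bound_of_continuousOn hu.continuousOn
  refine ⟨C, Set.forall_mem_range.2 fun x => ?_⟩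
  obtain ⟨y, hy, hyx⟩ := hper.exists_mem_Box x
  exact hyx ▸ hC y (subset_closure hy)

theorem supN_nonneg (u : E d → ℝ) : 0 ≤ supN u :=
  Real.iSup_nonneg fun _ => abs_nonneg _

theorem lpNorm_top_le_supN {u : E d → ℝ} (hu : Continuous u) (hper : Periodic u) :
    lpNorm u ⊤ (torusVolume d) ≤ supN u := by
  rw [← toReal_eLpNorm hu.aestronglyMeasurable, eLpNorm_exponent_top]
  exact ENNReal.toReal_le_of_le_ofReal (supN_nonneg u) <| eLpNormEssSup_le_of_ae_bound <|
    ae_of_all _ fun x => le_ciSup (hper.bddAbove_range_abs hu) x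

theorem HkNorm_nonneg (k : ℕ) (u : E d → ℝ) : 0 ≤ HkNorm k u :=
  Real.sqrt_nonneg _

theorem derivLpNorm_zero_le_supN {u : E d → ℝ} (hu : Continuous u) (hper : Periodic u) {r : ℝ}
    (hr : 0 < r) : derivLpNorm r 0 u ≤ supN u := by
  refine derivLpNorm_le (supN_nonneg u) fun a ha => ?_
  obtain rfl : a = 0 := funext fun i => by simpa using Finset.sum_eq_zero_iff.1 ha i
  rw [multiD_zero, Nat.cast_zero, ENNReal.div_zero (by simpa)]
  exact lpNorm_top_le_supN hu hper

theorem ofReal_two_mul_natCast_div {k : ℕ} (hk : k ≠ 0) : ENNReal.ofReal (2 * k) / k = 2 := by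
  rw [ENNReal.ofReal_mul zero_le_two, ENNReal.ofReal_natCast, ENNReal.ofReal_ofNat,
    ENNReal.mul_div_cancel_right (mod_cast hk) (ENNReal.natCast_ne_top k)]

theorem derivLpNorm_two_mul_le_HkNorm {u : E d → ℝ} (hu : ContDiff ℝ (⊤ : ℕ∞) u) {k : ℕ}
    (hk : k ≠ 0) : derivLpNorm (2 * k) k u ≤ HkNorm k u := by
  refine derivLpNorm_le (HkNorm_nonneg k u) fun a ha => ?_
  rw [ofReal_two_mul_natCast_div hk, ← L2Norm_eq_lpNorm (contDiff_multiD hu a).continuous]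
  exact L2Norm_multiD_le_HkNorm ha.le u

theorem L2Norm_multiD_mul_multiD_le {f g : E d → ℝ} (hf : ContDiff ℝ (⊤ : ℕ∞) f)
    (hg : ContDiff ℝ (⊤ : ℕ∞) g) {a b : Fin d → ℕ} {k : ℕ} (hk : k ≠ 0)
    (hab : ∑ i, a i + ∑ i, b i = k) :
    L2Norm (fun x => multiD a f x * multiD b g x) ≤
      derivLpNorm (2 * k) (∑ i, a i) f * derivLpNorm (2 * k) (∑ i, b i) g := by
  have hfa := (contDiff_multiD hf a).continuous
  have hgb := (contDiff_multiD hg b).continuous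
  have holder : (ENNReal.ofReal (2 * k) / (∑ i, a i : ℕ)).HolderTriple
      (ENNReal.ofReal (2 * k) / (∑ i, b i : ℕ)) (ENNReal.ofReal (2 * k) / k) :=
    holderTriple_div (by simpa [Nat.pos_iff_ne_zero]) ENNReal.ofReal_ne_top (mod_cast hab)
  rw [ofReal_two_mul_natCast_div hk] at holder
  rw [L2Norm_eq_lpNorm (u := fun x => multiD a f x * multiD b g x) (hfa.mul hgb)]
  exact (lpNorm_mul_le (memLp_Box hfa _) (memLp_Box hgb _)).trans
    (mul_le_mul (lpNorm_multiD_le_derivLpNorm _ rfl f) (lpNorm_multiD_le_derivLpNorm _ rfl g)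
      lpNorm_nonneg (derivLpNorm_nonneg _ _ _))

theorem L2Norm_multiD_mul_multiD_pow_le {f g : E d → ℝ} (hf : ContDiff ℝ (⊤ : ℕ∞) f)
    (hg : ContDiff ℝ (⊤ : ℕ∞) g) (hpf : Periodic f) (hpg : Periodic g) {a b : Fin d → ℕ} {k : ℕ}
    (hk : k ≠ 0) (hab : ∑ i, a i + ∑ i, b i = k) :
    L2Norm (fun x => multiD a f x * multiD b g x) ^ k ≤
      ((2 * k) ^ k ^ 3) ^ 2 *
        ((supN f * HkNorm k g) ^ (∑ i, b i) * (HkNorm k f * supN g) ^ (∑ i, a i)) := by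
  have hr : (1 : ℝ) ≤ 2 * k := by
    have : (1 : ℝ) ≤ k := mod_cast Nat.one_le_iff_ne_zero.2 hk
    linarith
  have interp {u : E d → ℝ} (hu : ContDiff ℝ (⊤ : ℕ∞) u) (hper : Periodic u) {j l : ℕ}
      (hjl : j + l = k) : derivLpNorm (2 * k) j u ^ k ≤
        (2 * k) ^ k ^ 3 * (supN u ^ l * HkNorm k u ^ j) := by
    have hN (n : ℕ) : 0 ≤ derivLpNorm (2 * k) n u := derivLpNorm_nonneg _ n u
    have h := derivLpNorm_pow_le hu hper hr (j := j) (l := l) (by rw [← hjl]; simp)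
    rw [hjl] at h
    refine h.trans ?_
    have := hN 0
    have := hN k
    have := supN_nonneg u
    gcongr
    exacts [derivLpNorm_zero_le_supN hu.continuous hper (by linarith),
      derivLpNorm_two_mul_le_HkNorm hu hk]
  have hL2 : 0 ≤ L2Norm fun x => multiD a f x * multiD b g x := Real.sqrt_nonneg _
  calc L2Norm (fun x => multiD a f x * multiD b g x) ^ k
      ≤ (derivLpNorm (2 * k) (∑ i, a i) f * derivLpNorm (2 * k) (∑ i, b i) g) ^ k :=
        pow_le_pow_left₀ hL2 (L2Norm_multiD_mul_multiD_le hf hg hk hab) k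
    _ = derivLpNorm (2 * k) (∑ i, a i) f ^ k * derivLpNorm (2 * k) (∑ i, b i) g ^ k :=
        mul_pow _ _ _
    _ ≤ (2 * k) ^ k ^ 3 * (supN f ^ (∑ i, b i) * HkNorm k f ^ (∑ i, a i)) *
          ((2 * k) ^ k ^ 3 * (supN g ^ (∑ i, a i) * HkNorm k g ^ (∑ i, b i))) := by
        refine mul_le_mul (interp hf hpf hab) (interp hg hpg ((add_comm _ _).trans hab))
          (pow_nonneg (derivLpNorm_nonneg _ _ _) _) ?_
        have := supN_nonneg f
        have := HkNorm_nonneg k f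
        positivity
    _ = _ := by ring

theorem exists_forall_le_add_mul_of_pow_le {C ε : ℝ} (hC : 0 ≤ C) (hε : 0 < ε) (k : ℕ) :
    ∃ K : ℝ, 0 < K ∧ ∀ {a b : ℕ}, a ≠ 0 → a + b = k → ∀ {x y z : ℝ}, 0 ≤ x → 0 ≤ y →
      z ^ k ≤ C * (x ^ b * y ^ a) → z ≤ ε * x + K * y := by
  set e := min 1 ε
  have he : 0 < e := lt_min one_pos hε
  set K := 1 + C / e ^ k
  have hK : 1 ≤ K := le_add_of_nonneg_right (by positivity)
  refine ⟨K, one_pos.trans_le hK, fun {a b} ha hab {x y z} hx hy hz => ?_⟩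
  have hC_le : C ≤ e ^ b * K ^ a :=
    calc C = e ^ k * (C / e ^ k) := (mul_div_cancel₀ C (pow_pos he k).ne').symm
      _ ≤ e ^ b * K ^ a :=
        mul_le_mul (pow_le_pow_of_le_one he.le (min_le_left _ _) (hab ▸ Nat.le_add_left b a))
          ((le_add_of_nonneg_left zero_le_one).trans (le_self_pow₀ hK ha)) (by positivity)
          (by positivity)
  refine le_of_pow_le_pow_left₀ (n := k) (by omega) (by positivity) ?_
  calc z ^ k ≤ e ^ b * K ^ a * (x ^ b * y ^ a) := hz.trans (by gcongr)
    _ = (e * x) ^ b * (K * y) ^ a := by rw [mul_pow, mul_pow, mul_mul_mul_comm]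
    _ ≤ (ε * x + K * y) ^ b * (ε * x + K * y) ^ a := by
      gcongr
      · exact (mul_le_mul_of_nonneg_right (min_le_right _ _) hx).trans
          (le_add_of_nonneg_right (by positivity))
      · exact le_add_of_nonneg_left (by positivity)
    _ = (ε * x + K * y) ^ k := by rw [← pow_add, add_comm b, hab]

theorem le_max_mul_add_of_pow_le {C x y z : ℝ} (hx : 0 ≤ x) (hy : 0 ≤ y) {a b k : ℕ}
    (hk : k ≠ 0) (hab : a + b = k) (hz : z ^ k ≤ C * (x ^ b * y ^ a)) : z ≤ max 1 C * (x + y) := by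
  refine le_of_pow_le_pow_left₀ hk (by positivity) ?_
  calc z ^ k ≤ max 1 C ^ k * ((x + y) ^ b * (x + y) ^ a) := by
        refine hz.trans ?_
        gcongr
        · exact (le_max_right 1 C).trans (le_self_pow₀ (le_max_left 1 C) hk)
        · exact le_add_of_nonneg_right hy
        · exact le_add_of_nonneg_left hx
    _ = (max 1 C * (x + y)) ^ k := by rw [← pow_add, add_comm b, hab, mul_pow]

theorem sobolev_product_interpolation_general (d k : ℕ) (hk : 0 < k) :
    (∃ C : ℝ, 0 < C ∧ ∀ mb m : Fin d → ℕ, ((∑ i, mb i) + ∑ i, m i) = k →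
      ∀ g₁ g₂ : E d → ℝ, ContDiff ℝ (⊤ : ℕ∞) g₁ → ContDiff ℝ (⊤ : ℕ∞) g₂ →
        Periodic g₁ → Periodic g₂ →
        L2Norm (fun x => multiD mb g₁ x * multiD m g₂ x)
          ≤ C * (supN g₁ * HkNorm k g₂ + HkNorm k g₁ * supN g₂)) ∧
    (∀ ε : ℝ, 0 < ε → ∃ Cε : ℝ, 0 < Cε ∧
      ∀ mb m : Fin d → ℕ, ((∑ i, mb i) + ∑ i, m i) = k → mb ≠ 0 →
        ∀ g₁ g₂ : E d → ℝ, ContDiff ℝ (⊤ : ℕ∞) g₁ → ContDiff ℝ (⊤ : ℕ∞) g₂ →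
          Periodic g₁ → Periodic g₂ →
          L2Norm (fun x => multiD mb g₁ x * multiD m g₂ x)
            ≤ ε * (supN g₁ * HkNorm k g₂) + Cε * (HkNorm k g₁ * supN g₂)) := by
  have hC : (0 : ℝ) ≤ ((2 * k) ^ k ^ 3) ^ 2 := by positivity
  have hnonneg (u v : E d → ℝ) : 0 ≤ supN u * HkNorm k v :=
    mul_nonneg (supN_nonneg u) (HkNorm_nonneg k v)
  have hnonneg' (u v : E d → ℝ) : 0 ≤ HkNorm k u * supN v :=
    mul_nonneg (HkNorm_nonneg k u) (supN_nonneg v)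
  refine ⟨⟨_, lt_max_of_lt_left one_pos, fun mb m hsum g₁ g₂ hg₁ hg₂ hp₁ hp₂ =>
    le_max_mul_add_of_pow_le (hnonneg _ _) (hnonneg' _ _) hk.ne' hsum
      (L2Norm_multiD_mul_multiD_pow_le hg₁ hg₂ hp₁ hp₂ hk.ne' hsum)⟩, fun ε hε => ?_⟩
  obtain ⟨Cε, hCε, young⟩ := exists_forall_le_add_mul_of_pow_le hC hε k
  refine ⟨Cε, hCε, fun mb m hsum hmb g₁ g₂ hg₁ hg₂ hp₁ hp₂ =>
    young (fun h => hmb ?_) hsum (hnonneg _ _) (hnonneg' _ _)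
      (L2Norm_multiD_mul_multiD_pow_le hg₁ hg₂ hp₁ hp₂ hk.ne' hsum)⟩
  exact funext fun i => Finset.sum_eq_zero_iff.1 h i (Finset.mem_univ i)

/-- **Interpolation product inequality on the torus**: for `k ≥ d/2` and multi-indices
`m̄, m` with `|m̄| + |m| = k`, (a) `‖(∂^m̄ g₁)(∂^m g₂)‖_{L²} ≤ C (‖g₁‖_∞ ‖g₂‖_{H^k}
+ ‖g₁‖_{H^k} ‖g₂‖_∞)` with `C = C(k,d)`; and (b) if `m̄ ≠ 0`, for every `ε > 0` there is
`C_ε = C(ε,k,d)` with `‖(∂^m̄ g₁)(∂^m g₂)‖_{L²} ≤ ε ‖g₁‖_∞ ‖g₂‖_{H^k}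
+ C_ε ‖g₁‖_{H^k} ‖g₂‖_∞`. -/
theorem sobolev_product_interpolation
    (d k : ℕ) (hd : 1 ≤ d) (hk : 0 < k) (hkd : d ≤ 2 * k) :
    (∃ C : ℝ, 0 < C ∧ ∀ mb m : Fin d → ℕ, ((∑ i, mb i) + ∑ i, m i) = k →
      ∀ g₁ g₂ : E d → ℝ, ContDiff ℝ (⊤ : ℕ∞) g₁ → ContDiff ℝ (⊤ : ℕ∞) g₂ →
        Periodic g₁ → Periodic g₂ →
        L2Norm (fun x => multiD mb g₁ x * multiD m g₂ x)
          ≤ C * (supN g₁ * HkNorm k g₂ + HkNorm k g₁ * supN g₂)) ∧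
    (∀ ε : ℝ, 0 < ε → ∃ Cε : ℝ, 0 < Cε ∧
      ∀ mb m : Fin d → ℕ, ((∑ i, mb i) + ∑ i, m i) = k → mb ≠ 0 →
        ∀ g₁ g₂ : E d → ℝ, ContDiff ℝ (⊤ : ℕ∞) g₁ → ContDiff ℝ (⊤ : ℕ∞) g₂ →
          Periodic g₁ → Periodic g₂ →
          L2Norm (fun x => multiD mb g₁ x * multiD m g₂ x)
            ≤ ε * (supN g₁ * HkNorm k g₂) + Cε * (HkNorm k g₁ * supN g₂)) :=
  sobolev_product_interpolation_general d k hk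
end
end
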